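/- arXiv:1905.04758 — 6 statements merged into one kernel-verified Lean document; each statement's English description precedes it below -/
import Mathlib

section
/- Let m ≥ 1 be a natural number and suppose E[A^m] < 1. Then E[X^i] < ∞ for every i ≤ m, and E[X^m] = (∑_{i=0}^{m-1} C(m,i) · E[A^i] · E[X^i]) / (1 − E[A^m]), where C(m,i) is the binomial coefficient. -/
open MeasureTheory ProbabilityTheory ENNReal

open Filter Topology

/-!
Write `ρ = ‖A‖ₘ < 1`. Substituting `X =_d A·X + 1` into a moment of `c + d·X` and integrating out
the independent factor `A` by Minkowski's inequality replaces `(c, d)` by `(c + d, d·ρ)`.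
Truncation at a level `K` survives this substitution, so starting from `(0, 1)` it gives, for every
`n`, `E[min(K, Xᵐ)] ≤ E[min(K, (1 + ρ + ⋯ + ρⁿ⁻¹ + ρⁿ·X)ᵐ)]`. As `X` is almost surely finite,
letting `n → ∞` by dominated convergence and then `K → ∞` yields `‖X‖ₘ ≤ 1 / (1 - ρ)`. Once the
moments are known to be finite, the binomial expansion of `E[(A·X + 1)ᵐ]` is solved for `E[Xᵐ]`.
-/

theorem eq_div_one_sub_of_eq_add_mul {x s a : ℝ≥0∞} (hx : x ≠ ⊤) (ha : a < 1)
    (h : x = s + a * x) : x = s / (1 - a) := by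
  rw [ENNReal.eq_div_iff (tsub_pos_of_lt ha).ne' (by simp), ENNReal.sub_mul fun _ _ ↦ hx, one_mul]
  exact ENNReal.sub_eq_of_eq_add (mul_ne_top ha.ne_top hx) h

section LIntegral

variable {Ω : Type*} [MeasurableSpace Ω] {P : Measure Ω}

theorem lintegral_le_of_forall_lintegral_min_natCast_le {f : Ω → ℝ≥0∞} (hf : AEMeasurable f P)
    {C : ℝ≥0∞} (hC : ∀ K : ℕ, ∫⁻ ω, min (K : ℝ≥0∞) (f ω) ∂P ≤ C) : ∫⁻ ω, f ω ∂P ≤ C := by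
  have iSup_min_natCast (x : ℝ≥0∞) : ⨆ K : ℕ, min (K : ℝ≥0∞) x = x := by
    rw [← iSup_inf_eq, iSup_natCast, top_inf_eq]
  calc ∫⁻ ω, f ω ∂P = ∫⁻ ω, ⨆ K : ℕ, min (K : ℝ≥0∞) (f ω) ∂P := by simp only [iSup_min_natCast]
    _ = ⨆ K : ℕ, ∫⁻ ω, min (K : ℝ≥0∞) (f ω) ∂P :=
        lintegral_iSup' (fun K ↦ aemeasurable_const.min hf) <| ae_of_all _ fun ω K L hKL ↦
          min_le_min_right _ (Nat.cast_le.2 hKL)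
    _ ≤ C := iSup_le hC

theorem lintegral_pow_lt_top_of_le [IsFiniteMeasure P] {f : Ω → ℝ≥0∞} {i m : ℕ} (him : i ≤ m)
    (hm : ∫⁻ ω, f ω ^ m ∂P < ⊤) : ∫⁻ ω, f ω ^ i ∂P < ⊤ := by
  have pow_le_one_add_pow (x : ℝ≥0∞) : x ^ i ≤ 1 + x ^ m := by
    rcases le_total x 1 with hx | hx
    · exact (pow_le_one' hx i).trans le_self_add
    · exact (pow_le_pow_right' hx him).trans le_add_self
  calc ∫⁻ ω, f ω ^ i ∂P ≤ ∫⁻ ω, 1 + f ω ^ m ∂P := lintegral_mono fun ω ↦ pow_le_one_add_pow (f ω)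
    _ = P Set.univ + ∫⁻ ω, f ω ^ m ∂P := by rw [lintegral_add_left measurable_const, lintegral_one]
    _ < ⊤ := add_lt_top.2 ⟨measure_lt_top P _, hm⟩

theorem lintegral_comp_eq_lintegral_lintegral_of_indepFun [IsFiniteMeasure P]
    {α β : Type*} [MeasurableSpace α] [MeasurableSpace β] {A : Ω → α} {X : Ω → β}
    (hA : AEMeasurable A P) (hX : AEMeasurable X P) (hAX : IndepFun A X P)
    {F : α → β → ℝ≥0∞} (hF : Measurable (Function.uncurry F)) :
    ∫⁻ ω, F (A ω) (X ω) ∂P = ∫⁻ ω, ∫⁻ ω', F (A ω') (X ω) ∂P ∂P := by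
  calc ∫⁻ ω, F (A ω) (X ω) ∂P
      = ∫⁻ z, Function.uncurry F z ∂P.map (fun ω ↦ (A ω, X ω)) :=
        (lintegral_map' hF.aemeasurable (hA.prodMk hX)).symm
    _ = ∫⁻ z, Function.uncurry F z ∂(P.map A).prod (P.map X) := by
        rw [(indepFun_iff_map_prod_eq_prod_map_map hA hX).1 hAX]
    _ = ∫⁻ x, ∫⁻ a, F a x ∂P.map A ∂P.map X := lintegral_prod_symm' _ hF
    _ = ∫⁻ ω, ∫⁻ a, F a (X ω) ∂P.map A ∂P := lintegral_map' hF.lintegral_prod_left'.aemeasurable hX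
    _ = ∫⁻ ω, ∫⁻ ω', F (A ω') (X ω) ∂P ∂P :=
        lintegral_congr fun ω ↦ lintegral_map' (by fun_prop) hA

theorem lintegral_mul_add_one_pow_of_indepFun {A X : Ω → ℝ≥0∞} (hA : AEMeasurable A P)
    (hX : AEMeasurable X P) (hAX : IndepFun A X P) (m : ℕ) :
    ∫⁻ ω, (A ω * X ω + 1) ^ m ∂P =
      ∑ i ∈ Finset.range (m + 1),
        (m.choose i : ℝ≥0∞) * (∫⁻ ω, A ω ^ i ∂P) * (∫⁻ ω, X ω ^ i ∂P) := by
  have hprod (i : ℕ) :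
      ∫⁻ ω, A ω ^ i * X ω ^ i ∂P = (∫⁻ ω, A ω ^ i ∂P) * ∫⁻ ω, X ω ^ i ∂P :=
    lintegral_mul_eq_lintegral_mul_lintegral_of_indepFun'' (hA.pow_const i) (hX.pow_const i)
      (hAX.comp (measurable_id.pow_const i) (measurable_id.pow_const i))
  calc ∫⁻ ω, (A ω * X ω + 1) ^ m ∂P
      = ∫⁻ ω, ∑ i ∈ Finset.range (m + 1), (m.choose i : ℝ≥0∞) * (A ω ^ i * X ω ^ i) ∂P := by
        simp only [add_pow, mul_pow, one_pow, mul_one, mul_comm (m.choose _ : ℝ≥0∞)]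
    _ = ∑ i ∈ Finset.range (m + 1), (m.choose i : ℝ≥0∞) * ∫⁻ ω, A ω ^ i * X ω ^ i ∂P := by
        rw [lintegral_finsetSum' _ fun i _ ↦ by fun_prop]
        exact Finset.sum_congr rfl fun i _ ↦ lintegral_const_mul'' _ (by fun_prop)
    _ = _ := by simp only [hprod, mul_assoc]

end LIntegral

section FixedPoint

variable {Ω : Type*} [MeasurableSpace Ω] {P : Measure Ω} [IsProbabilityMeasure P]
  {A X : Ω → ℝ≥0∞} {p : ℝ}

theorem eLpNorm'_const_add_const_mul_le (hA : AEMeasurable A P) (hp : 1 ≤ p) (c d : ℝ≥0∞) :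
    eLpNorm' (fun ω ↦ c + d * A ω) p P ≤ c + d * eLpNorm' A p P := by
  have hp0 : 0 < p := by linarith
  have hmul : eLpNorm' (fun ω ↦ d * A ω) p P = d * eLpNorm' A p P := by
    simp only [eLpNorm', enorm_eq_self, ENNReal.mul_rpow_of_nonneg _ _ hp0.le]
    rw [lintegral_const_mul'' _ (hA.pow_const p), ENNReal.mul_rpow_of_nonneg _ _ (by positivity),
      one_div, ENNReal.rpow_rpow_inv hp0.ne']
  calc eLpNorm' (fun ω ↦ c + d * A ω) p P
      ≤ eLpNorm' (fun _ ↦ c) p P + eLpNorm' (fun ω ↦ d * A ω) p P :=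
        eLpNorm'_add_le aestronglyMeasurable_const (hA.const_mul d).aestronglyMeasurable hp
    _ = c + d * eLpNorm' A p P := by
        rw [eLpNorm'_const c hp0, measure_univ, ENNReal.one_rpow, mul_one, enorm_eq_self, hmul]

theorem lintegral_min_affine_rpow_le (hA : AEMeasurable A P) (hp : 1 ≤ p) (K c d : ℝ≥0∞) :
    ∫⁻ ω, min K ((c + d * A ω) ^ p) ∂P ≤ min K ((c + d * eLpNorm' A p P) ^ p) := by
  have hp0 : 0 < p := by linarith
  refine le_min (lintegral_le_const <| ae_of_all _ fun ω ↦ min_le_left _ _) ?_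
  calc ∫⁻ ω, min K ((c + d * A ω) ^ p) ∂P
      ≤ ∫⁻ ω, ‖c + d * A ω‖ₑ ^ p ∂P := lintegral_mono fun ω ↦ min_le_right _ _
    _ = eLpNorm' (fun ω ↦ c + d * A ω) p P ^ p := lintegral_rpow_enorm_eq_rpow_eLpNorm' hp0
    _ ≤ (c + d * eLpNorm' A p P) ^ p :=
        ENNReal.rpow_le_rpow (eLpNorm'_const_add_const_mul_le hA hp c d) hp0.le

theorem tendsto_lintegral_min_affine_rpow (hX : AEMeasurable X P) (hX_top : ∀ᵐ ω ∂P, X ω ≠ ⊤)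
    {K r : ℝ≥0∞} (hK : K ≠ ⊤) (hr : r < 1) (c : ℝ≥0∞) :
    Tendsto (fun n : ℕ ↦ ∫⁻ ω, min K ((c + r ^ n * X ω) ^ p) ∂P) atTop (𝓝 (min K (c ^ p))) := by
  have hlim : ∀ᵐ ω ∂P,
      Tendsto (fun n : ℕ ↦ min K ((c + r ^ n * X ω) ^ p)) atTop (𝓝 (min K (c ^ p))) := by
    filter_upwards [hX_top] with ω hω
    have hgeom : Tendsto (fun n : ℕ ↦ r ^ n * X ω) atTop (𝓝 0) := by
      simpa using ENNReal.Tendsto.mul_const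
        (tendsto_pow_atTop_nhds_zero_of_lt_one hr) (Or.inr hω)
    have haffine : Tendsto (fun n : ℕ ↦ c + r ^ n * X ω) atTop (𝓝 c) := by
      simpa using hgeom.const_add c
    exact tendsto_const_nhds.min ((ENNReal.continuous_rpow_const.tendsto c).comp haffine)
  simpa using tendsto_lintegral_of_dominated_convergence' (fun _ ↦ K)
    (fun n ↦ by measurability) (fun n ↦ ae_of_all _ fun ω ↦ min_le_left _ _) (by simpa) hlim

theorem lintegral_min_affine_rpow_le_of_identDistrib (hA : AEMeasurable A P)
    (hAX : IndepFun A X P) (hfix : IdentDistrib X (fun ω ↦ A ω * X ω + 1) P P) (hp : 1 ≤ p)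
    (K c d : ℝ≥0∞) :
    ∫⁻ ω, min K ((c + d * X ω) ^ p) ∂P ≤
      ∫⁻ ω, min K ((c + d + d * eLpNorm' A p P * X ω) ^ p) ∂P := by
  have hregroup (a x : ℝ≥0∞) : c + d * (a * x + 1) = c + d + d * x * a := by ring
  calc ∫⁻ ω, min K ((c + d * X ω) ^ p) ∂P
      = ∫⁻ ω, min K ((c + d * (A ω * X ω + 1)) ^ p) ∂P :=
        (hfix.comp (u := fun x ↦ min K ((c + d * x) ^ p)) (by measurability)).lintegral_eq
    _ = ∫⁻ ω, min K ((c + d + d * X ω * A ω) ^ p) ∂P := by simp only [hregroup]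
    _ = ∫⁻ ω, ∫⁻ ω', min K ((c + d + d * X ω * A ω') ^ p) ∂P ∂P :=
        lintegral_comp_eq_lintegral_lintegral_of_indepFun hA hfix.aemeasurable_fst hAX
          (F := fun a x ↦ min K ((c + d + d * x * a) ^ p))
          (by unfold Function.uncurry; measurability)
    _ ≤ ∫⁻ ω, min K ((c + d + d * X ω * eLpNorm' A p P) ^ p) ∂P :=
        lintegral_mono fun ω ↦ lintegral_min_affine_rpow_le hA hp K (c + d) (d * X ω)
    _ = ∫⁻ ω, min K ((c + d + d * eLpNorm' A p P * X ω) ^ p) ∂P := by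
        simp only [mul_right_comm]

theorem lintegral_min_rpow_le_geom_sum_of_identDistrib (hA : AEMeasurable A P)
    (hAX : IndepFun A X P) (hfix : IdentDistrib X (fun ω ↦ A ω * X ω + 1) P P) (hp : 1 ≤ p)
    (K : ℝ≥0∞) (n : ℕ) :
    ∫⁻ ω, min K (X ω ^ p) ∂P ≤
      ∫⁻ ω, min K
        ((∑ k ∈ Finset.range n, eLpNorm' A p P ^ k + eLpNorm' A p P ^ n * X ω) ^ p) ∂P := by
  induction n with
  | zero => simp
  | succ n ih =>
    rw [Finset.sum_range_succ, pow_succ]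
    exact ih.trans (lintegral_min_affine_rpow_le_of_identDistrib hA hAX hfix hp K _ _)

theorem eLpNorm'_le_inv_one_sub_eLpNorm'_of_identDistrib (hA : AEMeasurable A P)
    (hX_top : ∀ᵐ ω ∂P, X ω ≠ ⊤) (hAX : IndepFun A X P)
    (hfix : IdentDistrib X (fun ω ↦ A ω * X ω + 1) P P) (hp : 1 ≤ p) (hA1 : eLpNorm' A p P < 1) :
    eLpNorm' X p P ≤ (1 - eLpNorm' A p P)⁻¹ := by
  have hp0 : 0 < p := by linarith
  have hX : AEMeasurable X P := hfix.aemeasurable_fst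
  set ρ := eLpNorm' A p P
  have hgeom (n : ℕ) : ∑ k ∈ Finset.range n, ρ ^ k ≤ (1 - ρ)⁻¹ :=
    (ENNReal.sum_le_tsum _).trans_eq (ENNReal.tsum_geometric ρ)
  have hiterate (K : ℝ≥0∞) (n : ℕ) :
      ∫⁻ ω, min K (X ω ^ p) ∂P ≤ ∫⁻ ω, min K (((1 - ρ)⁻¹ + ρ ^ n * X ω) ^ p) ∂P := by
    refine (lintegral_min_rpow_le_geom_sum_of_identDistrib hA hAX hfix hp K n).trans
      (lintegral_mono fun ω ↦ ?_)
    gcongr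
    exact hgeom n
  have htruncated (K : ℕ) : ∫⁻ ω, min (K : ℝ≥0∞) (X ω ^ p) ∂P ≤ (1 - ρ)⁻¹ ^ p :=
    (ge_of_tendsto' (tendsto_lintegral_min_affine_rpow hX hX_top (natCast_ne_top K) hA1 _)
      (hiterate K)).trans (min_le_right _ _)
  rw [← ENNReal.rpow_le_rpow_iff hp0, ← lintegral_rpow_enorm_eq_rpow_eLpNorm' hp0]
  exact lintegral_le_of_forall_lintegral_min_natCast_le (hX.pow_const p) htruncated

theorem lintegral_pow_lt_top_of_identDistrib (hA : AEMeasurable A P)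
    (hX_top : ∀ᵐ ω ∂P, X ω ≠ ⊤) (hAX : IndepFun A X P)
    (hfix : IdentDistrib X (fun ω ↦ A ω * X ω + 1) P P) {m : ℕ} (hAm : ∫⁻ ω, A ω ^ m ∂P < 1) :
    ∫⁻ ω, X ω ^ m ∂P < ⊤ := by
  have hm : m ≠ 0 := by
    rintro rfl
    simp at hAm
  have hm1 : (1 : ℝ) ≤ m := Nat.one_le_cast.2 (Nat.one_le_iff_ne_zero.2 hm)
  have hm0 : (0 : ℝ) < m := by linarith
  have lintegral_pow_eq (Y : Ω → ℝ≥0∞) : ∫⁻ ω, Y ω ^ m ∂P = eLpNorm' Y m P ^ (m : ℝ) := by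
    rw [← lintegral_rpow_enorm_eq_rpow_eLpNorm' hm0]
    simp only [enorm_eq_self, ENNReal.rpow_natCast]
  have hA1 : eLpNorm' A m P < 1 := by
    rwa [lintegral_pow_eq, ← ENNReal.one_rpow m, ENNReal.rpow_lt_rpow_iff hm0] at hAm
  have hX_lt_top : eLpNorm' X m P < ⊤ :=
    (eLpNorm'_le_inv_one_sub_eLpNorm'_of_identDistrib hA hX_top hAX hfix hm1 hA1).trans_lt
      (ENNReal.inv_lt_top.2 (tsub_pos_of_lt hA1))
  rw [lintegral_pow_eq]
  exact ENNReal.rpow_lt_top_of_nonneg hm0.le hX_lt_top.ne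

end FixedPoint

theorem stmt_0_general {Ω : Type*} [MeasurableSpace Ω] {P : Measure Ω} [IsProbabilityMeasure P]
    {A X : Ω → ℝ≥0∞} (hA : AEMeasurable A P) (hX_top : ∀ᵐ ω ∂P, X ω ≠ ⊤)
    (hAX : IndepFun A X P) (hfix : IdentDistrib X (fun ω ↦ A ω * X ω + 1) P P)
    (m : ℕ) (hAm : ∫⁻ ω, A ω ^ m ∂P < 1) :
    (∀ i ≤ m, ∫⁻ ω, X ω ^ i ∂P < ⊤) ∧
    ∫⁻ ω, X ω ^ m ∂P =
      (∑ i ∈ Finset.range m,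
        (m.choose i : ℝ≥0∞) * (∫⁻ ω, A ω ^ i ∂P) * (∫⁻ ω, X ω ^ i ∂P)) /
      (1 - ∫⁻ ω, A ω ^ m ∂P) := by
  have hXm : ∫⁻ ω, X ω ^ m ∂P < ⊤ :=
    lintegral_pow_lt_top_of_identDistrib hA hX_top hAX hfix hAm
  refine ⟨fun i him ↦ lintegral_pow_lt_top_of_le him hXm,
    eq_div_one_sub_of_eq_add_mul hXm.ne hAm ?_⟩
  calc ∫⁻ ω, X ω ^ m ∂P = ∫⁻ ω, (A ω * X ω + 1) ^ m ∂P := hfix.pow.lintegral_eq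
    _ = _ := by
      rw [lintegral_mul_add_one_pow_of_indepFun hA hfix.aemeasurable_fst hAX,
        Finset.sum_range_succ, Nat.choose_self, Nat.cast_one, one_mul]

theorem stmt_0 {Ω : Type*} [MeasurableSpace Ω] {P : Measure Ω} [IsProbabilityMeasure P]
    {A X : Ω → ℕ} (hA : Measurable A) (hX : Measurable X)
    (hAX : IndepFun A X P)
    (h0 : 0 < P {ω | A ω = 0})
    (hfix : Measure.map X P = Measure.map (fun ω => A ω * X ω + 1) P)
    (m : ℕ) (hm : 1 ≤ m)
    (hAm : ∫⁻ ω, (A ω : ℝ≥0∞) ^ m ∂P < 1) :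
    (∀ i ≤ m, ∫⁻ ω, (X ω : ℝ≥0∞) ^ i ∂P < ⊤) ∧
    ∫⁻ ω, (X ω : ℝ≥0∞) ^ m ∂P =
      (∑ i ∈ Finset.range m,
        (m.choose i : ℝ≥0∞) * (∫⁻ ω, (A ω : ℝ≥0∞) ^ i ∂P) * (∫⁻ ω, (X ω : ℝ≥0∞) ^ i ∂P)) /
      (1 - ∫⁻ ω, (A ω : ℝ≥0∞) ^ m ∂P) := by
  have hcast : Measurable (Nat.cast : ℕ → ℝ≥0∞) := measurable_from_top
  have hlaw : IdentDistrib X (fun ω ↦ A ω * X ω + 1) P P := ⟨by fun_prop, by fun_prop, hfix⟩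
  exact stmt_0_general (by fun_prop) (ae_of_all _ fun ω ↦ natCast_ne_top _) (hAX.comp hcast hcast)
    (by simpa [Function.comp_def] using hlaw.comp hcast) m hAm
end

section
/- Let m ≥ 1 be a natural number. If E[A^m] ≥ 1, then E[X^m] = ∞. -/
open MeasureTheory ProbabilityTheory ENNReal

/-!
If `X` has the law of `A * X + B` and `E[A ^ p] ≥ 1`, then independence gives
`E[X ^ p] ≤ E[A ^ p] * E[X ^ p] = E[(A * X) ^ p] ≤ E[(A * X + B) ^ p] = E[X ^ p]`.
When `B` is positive with positive probability the second inequality is strict as soon as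
`E[(A * X) ^ p]` is finite, so `E[X ^ p]` cannot be finite.
-/

section Moments

variable {Ω : Type*} [MeasurableSpace Ω] {P : Measure Ω} {p : ℝ}

theorem lintegral_mul_rpow_of_indepFun {A X : Ω → ℝ≥0∞} (hA : AEMeasurable A P)
    (hX : AEMeasurable X P) (hAX : IndepFun A X P) (hp : 0 ≤ p) :
    ∫⁻ ω, (A ω * X ω) ^ p ∂P = (∫⁻ ω, A ω ^ p ∂P) * ∫⁻ ω, X ω ^ p ∂P := by
  have hpow : Measurable fun x : ℝ≥0∞ => x ^ p := measurable_id.pow_const p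
  simp only [ENNReal.mul_rpow_of_nonneg _ _ hp]
  exact lintegral_mul_eq_lintegral_mul_lintegral_of_indepFun'' (hA.pow_const p) (hX.pow_const p)
    (hAX.comp hpow hpow)

theorem lintegral_rpow_lt_lintegral_add_rpow {Y B : Ω → ℝ≥0∞} (hY : AEMeasurable Y P)
    (hYB : AEMeasurable (fun ω => Y ω + B ω) P) (hB : ∃ᵐ ω ∂P, B ω ≠ 0) (hp : 0 < p)
    (hYp : ∫⁻ ω, Y ω ^ p ∂P ≠ ⊤) :
    ∫⁻ ω, Y ω ^ p ∂P < ∫⁻ ω, (Y ω + B ω) ^ p ∂P := by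
  have hfinite : ∀ᵐ ω ∂P, Y ω ^ p < ⊤ := ae_lt_top' (hY.pow_const p) hYp
  refine lintegral_strict_mono_of_ae_le_of_frequently_ae_lt (hYB.pow_const p) hYp
    (.of_forall fun ω => ENNReal.rpow_le_rpow le_self_add hp.le) ?_
  refine (hB.and_eventually hfinite).mono fun ω ⟨hBω, hYω⟩ => ?_
  have hYω_ne_top : Y ω ≠ ⊤ := ((ENNReal.rpow_lt_top_iff_of_pos hp).1 hYω).ne
  exact (ENNReal.rpow_lt_rpow (ENNReal.lt_add_right hYω_ne_top hBω) hp).ne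

theorem stmt_1_general {A B X : Ω → ℝ≥0∞} (hA : AEMeasurable A P) (hAX : IndepFun A X P)
    (hB : ∃ᵐ ω ∂P, B ω ≠ 0) (hfix : IdentDistrib X (fun ω => A ω * X ω + B ω) P P)
    (hp : 0 < p) (hAp : 1 ≤ ∫⁻ ω, A ω ^ p ∂P) :
    ∫⁻ ω, X ω ^ p ∂P = ⊤ := by
  have hX : AEMeasurable X P := hfix.aemeasurable_fst
  have hmul : ∫⁻ ω, (A ω * X ω) ^ p ∂P = (∫⁻ ω, A ω ^ p ∂P) * ∫⁻ ω, X ω ^ p ∂P :=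
    lintegral_mul_rpow_of_indepFun hA hX hAX hp.le
  have hadd : ∫⁻ ω, X ω ^ p ∂P = ∫⁻ ω, (A ω * X ω + B ω) ^ p ∂P :=
    (hfix.comp (measurable_id.pow_const p)).lintegral_eq
  by_contra hXp
  have hle : ∫⁻ ω, (A ω * X ω) ^ p ∂P ≤ ∫⁻ ω, X ω ^ p ∂P :=
    hadd ▸ lintegral_mono fun ω => ENNReal.rpow_le_rpow le_self_add hp.le
  have hlt : ∫⁻ ω, X ω ^ p ∂P < ∫⁻ ω, X ω ^ p ∂P :=
    calc ∫⁻ ω, X ω ^ p ∂P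
      _ ≤ (∫⁻ ω, A ω ^ p ∂P) * ∫⁻ ω, X ω ^ p ∂P := le_mul_of_one_le_left' hAp
      _ = ∫⁻ ω, (A ω * X ω) ^ p ∂P := hmul.symm
      _ < ∫⁻ ω, (A ω * X ω + B ω) ^ p ∂P :=
        lintegral_rpow_lt_lintegral_add_rpow (hA.mul hX) hfix.aemeasurable_snd hB hp
          (ne_top_of_le_ne_top hXp hle)
      _ = ∫⁻ ω, X ω ^ p ∂P := hadd.symm
  exact hlt.false

end Moments

theorem stmt_1 {Ω : Type*} [MeasurableSpace Ω] {P : Measure Ω} [IsProbabilityMeasure P]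
    {A X : Ω → ℕ} (hA : Measurable A) (hX : Measurable X)
    (hAX : IndepFun A X P)
    (h0 : 0 < P {ω | A ω = 0})
    (hfix : Measure.map X P = Measure.map (fun ω => A ω * X ω + 1) P)
    (m : ℕ) (hm : 1 ≤ m)
    (hAm : 1 ≤ ∫⁻ ω, (A ω : ℝ≥0∞) ^ m ∂P) :
    ∫⁻ ω, (X ω : ℝ≥0∞) ^ m ∂P = ⊤ := by
  have hcast : Measurable ((↑) : ℕ → ℝ≥0∞) := measurable_from_nat
  have hid : IdentDistrib X (fun ω => A ω * X ω + 1) P P :=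
    ⟨hX.aemeasurable, ((hA.mul hX).add_const 1).aemeasurable, hfix⟩
  have hidCast : IdentDistrib (fun ω => (X ω : ℝ≥0∞)) (fun ω => (A ω : ℝ≥0∞) * X ω + 1) P P := by
    simpa [Function.comp_def] using hid.comp hcast
  simpa using stmt_1_general (p := m) (hcast.comp hA).aemeasurable (hAX.comp hcast hcast)
    (.of_forall fun _ => one_ne_zero) hidCast (by exact_mod_cast hm) (by simpa using hAm)
end

section
/- E[X] < ∞ if and only if E[A] < 1, and in that case E[X] = 1 / (1 − E[A]). -/
open MeasureTheory ProbabilityTheory ENNReal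

/-!
Taking expectations in `X =_d A X + B`, with `A` and `X` independent, gives
`E[X] = E[A] E[X] + E[B]`, so everything follows once `E[A] < 1` is known to force `E[X] < ∞`.
For this, put `φ s = E[min (s X) 1]`. The fixed-point equation gives `φ s ≤ E[φ (s A)] + s E[B]`,
so an affine bound `φ s ≤ ε + C s` improves to `φ s ≤ ε + (E[A] C + E[B]) s`. Since `X` is almost
surely finite, such a bound with finite `C` exists for every `ε > 0`; iterating it and then letting
`ε → 0` yields `φ s ≤ E[B] / (1 - E[A]) s`, and dividing by `s → 0` bounds `E[X]`.
-/

open Filter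
open scoped Topology

section AffineFixedPoint

variable {a b x : ℝ≥0∞}

theorem mul_div_one_sub_add (ha : a < 1) : a * (b / (1 - a)) + b = b / (1 - a) := by
  have hsub : 1 - a ≠ 0 := (tsub_pos_of_lt ha).ne'
  calc a * (b / (1 - a)) + b = a * (b / (1 - a)) + (1 - a) * (b / (1 - a)) := by
        rw [ENNReal.mul_div_cancel hsub (by finiteness)]
    _ = b / (1 - a) := by rw [← add_mul, add_tsub_cancel_of_le ha.le, one_mul]

theorem div_one_sub_le_of_mul_add_le (ha : a < 1) (hx : a * x + b ≤ x) : b / (1 - a) ≤ x := by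
  have hsub : 1 - a ≠ 0 := (tsub_pos_of_lt ha).ne'
  rcases eq_or_ne x ⊤ with rfl | hx_top
  · exact le_top
  rw [ENNReal.div_le_iff hsub (by finiteness), ENNReal.mul_sub fun _ _ ↦ hx_top, mul_one,
    mul_comm x a]
  exact ENNReal.le_sub_of_add_le_left (by finiteness) hx

theorem lt_one_of_mul_add_le (hb : b ≠ 0) (hx_top : x ≠ ⊤) (hx : a * x + b ≤ x) : a < 1 := by
  by_contra! ha
  have : x + b ≤ x := (add_le_add_left (le_mul_of_one_le_left' ha) b).trans hx
  exact this.not_gt (ENNReal.lt_add_right hx_top hb)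

end AffineFixedPoint

section TruncatedMean

variable {Ω : Type*} [MeasurableSpace Ω] {P : Measure Ω} {A X : Ω → ℝ≥0∞}

/-- The truncated first moment `E[min (s X) 1]` at scale `s`, a substitute for `s E[X]` that,
for a finite measure, is finite whether or not `X` is integrable. -/
noncomputable def truncatedMean (P : Measure Ω) (X : Ω → ℝ≥0∞) (s : ℝ≥0∞) : ℝ≥0∞ :=
  ∫⁻ ω, min (s * X ω) 1 ∂P

theorem lintegral_min_natCast_le_of_truncatedMean_le {K : ℝ≥0∞}
    (hK : ∀ s ≠ ⊤, truncatedMean P X s ≤ K * s) (n : ℕ) : ∫⁻ ω, min (X ω) n ∂P ≤ K := by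
  rcases eq_or_ne n 0 with rfl | hn
  · simp
  have hn_zero : (n : ℝ≥0∞) ≠ 0 := by exact_mod_cast hn
  have hn_top : (n : ℝ≥0∞) ≠ ⊤ := ENNReal.natCast_ne_top n
  calc ∫⁻ ω, min (X ω) n ∂P = ∫⁻ ω, n * min ((n : ℝ≥0∞)⁻¹ * X ω) 1 ∂P := by
        simp_rw [mul_min, ← mul_assoc, ENNReal.mul_inv_cancel hn_zero hn_top, one_mul, mul_one]
    _ = n * truncatedMean P X (n : ℝ≥0∞)⁻¹ := lintegral_const_mul' _ _ hn_top
    _ ≤ n * (K * (n : ℝ≥0∞)⁻¹) := by gcongr; exact hK _ (ENNReal.inv_ne_top.2 hn_zero)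
    _ = K := by rw [mul_left_comm, ENNReal.mul_inv_cancel hn_zero hn_top, mul_one]

theorem lintegral_le_of_truncatedMean_le (hX : AEMeasurable X P) {K : ℝ≥0∞}
    (hK : ∀ s ≠ ⊤, truncatedMean P X s ≤ K * s) : ∫⁻ ω, X ω ∂P ≤ K :=
  calc ∫⁻ ω, X ω ∂P = ∫⁻ ω, ⨆ n : ℕ, min (X ω) n ∂P := by
        simp_rw [← inf_iSup_eq, ENNReal.iSup_natCast, inf_top_eq]
    _ = ⨆ n : ℕ, ∫⁻ ω, min (X ω) n ∂P :=
        lintegral_iSup' (fun n ↦ hX.min aemeasurable_const)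
          (.of_forall fun ω m n hmn ↦ min_le_min_left _ (by exact_mod_cast hmn))
    _ ≤ K := iSup_le (lintegral_min_natCast_le_of_truncatedMean_le hK)

theorem exists_measure_natCast_le_lt [IsFiniteMeasure P] (hX : AEMeasurable X P)
    (hX_top : ∀ᵐ ω ∂P, X ω ≠ ⊤) {ε : ℝ≥0∞} (hε : 0 < ε) : ∃ N : ℕ, P {ω | N ≤ X ω} < ε := by
  have hinter : ⋂ N : ℕ, {ω | N ≤ X ω} = {ω | X ω = ⊤} := by
    ext ω
    simp [← iSup_le_iff, ENNReal.iSup_natCast]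
  have htendsto : Tendsto (fun N : ℕ ↦ P {ω | N ≤ X ω}) atTop (𝓝 0) := by
    have hnull : P {ω | X ω = ⊤} = 0 := by simpa [ae_iff] using hX_top
    rw [← hnull, ← hinter]
    exact tendsto_measure_iInter_atTop (fun N ↦ nullMeasurableSet_le aemeasurable_const hX)
      (fun m n hmn ω (hω : n ≤ X ω) ↦ (Nat.cast_le.2 hmn).trans hω) ⟨0, measure_ne_top P _⟩
  exact (htendsto.eventually_lt_const hε).exists

theorem exists_truncatedMean_le_add_mul [IsProbabilityMeasure P] (hX : AEMeasurable X P)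
    (hX_top : ∀ᵐ ω ∂P, X ω ≠ ⊤) {ε : ℝ≥0∞} (hε : 0 < ε) :
    ∃ N : ℕ, ∀ s, truncatedMean P X s ≤ ε + N * s := by
  obtain ⟨N, hN⟩ := exists_measure_natCast_le_lt hX hX_top hε
  refine ⟨N, fun s ↦ ?_⟩
  have hbound (ω : Ω) : min (s * X ω) 1 ≤ {ω | N ≤ X ω}.indicator 1 ω + N * s := by
    by_cases hω : N ≤ X ω
    · simp [hω]
    · simpa [hω, mul_comm s] using Or.inl (mul_le_mul_left (not_le.1 hω).le s)
  calc truncatedMean P X s ≤ ∫⁻ ω, ({ω | N ≤ X ω}.indicator 1 ω + N * s) ∂P :=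
        lintegral_mono hbound
    _ = P {ω | N ≤ X ω} + N * s := by
        rw [lintegral_add_right _ measurable_const,
          lintegral_indicator_one₀ (nullMeasurableSet_le aemeasurable_const hX)]
        simp
    _ ≤ ε + N * s := by gcongr

theorem truncatedMean_mul_of_indepFun [IsFiniteMeasure P] (hA : AEMeasurable A P)
    (hX : AEMeasurable X P) (hAX : IndepFun A X P) (s : ℝ≥0∞) :
    truncatedMean P (fun ω ↦ A ω * X ω) s = ∫⁻ ω, truncatedMean P X (s * A ω) ∂P := by
  let g : ℝ≥0∞ × ℝ≥0∞ → ℝ≥0∞ := fun p ↦ min (s * p.1 * p.2) 1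
  have hg : Measurable g := by fun_prop
  calc truncatedMean P (fun ω ↦ A ω * X ω) s = ∫⁻ ω, g (A ω, X ω) ∂P := by
        simp only [truncatedMean, g, mul_assoc]
    _ = ∫⁻ p, g p ∂(P.map A).prod (P.map X) := by
        rw [← hAX.map_prod_eq_prod_map_map hA hX, lintegral_map' hg.aemeasurable (hA.prodMk hX)]
    _ = ∫⁻ ω, ∫⁻ y, g (A ω, y) ∂P.map X ∂P := by
        rw [lintegral_prod _ hg.aemeasurable,
          lintegral_map' hg.lintegral_prod_right'.aemeasurable hA]
    _ = ∫⁻ ω, truncatedMean P X (s * A ω) ∂P := by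
        refine lintegral_congr fun ω ↦ ?_
        have hgω : Measurable fun y ↦ g (A ω, y) := by fun_prop
        rw [lintegral_map' hgω.aemeasurable hX, truncatedMean]

end TruncatedMean

section Perpetuity

variable {Ω : Type*} [MeasurableSpace Ω] {P : Measure Ω} {A B X : Ω → ℝ≥0∞}

theorem identDistrib_natCast_mul_add {A B X : Ω → ℕ}
    (hfix : IdentDistrib X (fun ω ↦ A ω * X ω + B ω) P P) :
    IdentDistrib (fun ω ↦ (X ω : ℝ≥0∞)) (fun ω ↦ A ω * X ω + B ω) P P := by
  have hcast : Measurable (Nat.cast : ℕ → ℝ≥0∞) := .of_discrete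
  simpa [Function.comp_def] using hfix.comp hcast

theorem lintegral_eq_mul_add_of_identDistrib (hA : AEMeasurable A P) (hAX : IndepFun A X P)
    (hfix : IdentDistrib X (fun ω ↦ A ω * X ω + B ω) P P) :
    ∫⁻ ω, X ω ∂P = (∫⁻ ω, A ω ∂P) * ∫⁻ ω, X ω ∂P + ∫⁻ ω, B ω ∂P := by
  have hX := hfix.aemeasurable_fst
  calc ∫⁻ ω, X ω ∂P = ∫⁻ ω, (A ω * X ω + B ω) ∂P := hfix.lintegral_eq
    _ = ∫⁻ ω, A ω * X ω ∂P + ∫⁻ ω, B ω ∂P := lintegral_add_left' (hA.mul hX) _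
    _ = (∫⁻ ω, A ω ∂P) * ∫⁻ ω, X ω ∂P + ∫⁻ ω, B ω ∂P := by
        rw [lintegral_mul_eq_lintegral_mul_lintegral_of_indepFun'' hA hX hAX]

theorem truncatedMean_le_truncatedMean_mul_add (hB : AEMeasurable B P)
    (hfix : IdentDistrib X (fun ω ↦ A ω * X ω + B ω) P P) (s : ℝ≥0∞) :
    truncatedMean P X s ≤ truncatedMean P (fun ω ↦ A ω * X ω) s + s * ∫⁻ ω, B ω ∂P := by
  have htrunc : Measurable fun x : ℝ≥0∞ ↦ min (s * x) 1 := by fun_prop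
  calc truncatedMean P X s = ∫⁻ ω, min (s * (A ω * X ω + B ω)) 1 ∂P :=
        (hfix.comp htrunc).lintegral_eq
    _ ≤ ∫⁻ ω, (min (s * (A ω * X ω)) 1 + s * B ω) ∂P := by
        refine lintegral_mono fun ω ↦ ?_
        rw [mul_add, ← min_add_add_right]
        exact min_le_min_left _ le_self_add
    _ = truncatedMean P (fun ω ↦ A ω * X ω) s + s * ∫⁻ ω, B ω ∂P := by
        rw [lintegral_add_right' _ (hB.const_mul s), lintegral_const_mul'' s hB, truncatedMean]

variable [IsProbabilityMeasure P]

theorem truncatedMean_le_add_mul_of_forall_le (hA : AEMeasurable A P) (hB : AEMeasurable B P)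
    (hAX : IndepFun A X P) (hfix : IdentDistrib X (fun ω ↦ A ω * X ω + B ω) P P) {ε C : ℝ≥0∞}
    (hC : ∀ s, truncatedMean P X s ≤ ε + C * s) (s : ℝ≥0∞) :
    truncatedMean P X s ≤ ε + ((∫⁻ ω, A ω ∂P) * C + ∫⁻ ω, B ω ∂P) * s :=
  calc truncatedMean P X s
      ≤ truncatedMean P (fun ω ↦ A ω * X ω) s + s * ∫⁻ ω, B ω ∂P :=
        truncatedMean_le_truncatedMean_mul_add hB hfix s
    _ = ∫⁻ ω, truncatedMean P X (s * A ω) ∂P + s * ∫⁻ ω, B ω ∂P := by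
        rw [truncatedMean_mul_of_indepFun hA hfix.aemeasurable_fst hAX]
    _ ≤ ∫⁻ ω, (ε + C * s * A ω) ∂P + s * ∫⁻ ω, B ω ∂P := by
        gcongr with ω
        simpa only [mul_assoc] using hC (s * A ω)
    _ = ε + ((∫⁻ ω, A ω ∂P) * C + ∫⁻ ω, B ω ∂P) * s := by
        rw [lintegral_add_left measurable_const, lintegral_const_mul'' _ hA, lintegral_const,
          measure_univ]
        ring

theorem truncatedMean_le_add_pow_mul (hA : AEMeasurable A P) (hB : AEMeasurable B P)
    (hAX : IndepFun A X P) (hfix : IdentDistrib X (fun ω ↦ A ω * X ω + B ω) P P)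
    (hA_lt : ∫⁻ ω, A ω ∂P < 1) {ε C : ℝ≥0∞} (hC : ∀ s, truncatedMean P X s ≤ ε + C * s) (n : ℕ) :
    ∀ s, truncatedMean P X s ≤
      ε + ((∫⁻ ω, A ω ∂P) ^ n * C + (∫⁻ ω, B ω ∂P) / (1 - ∫⁻ ω, A ω ∂P)) * s := by
  induction n with
  | zero => exact fun s ↦ (hC s).trans (by gcongr; simp)
  | succ n ih =>
    intro s
    refine (truncatedMean_le_add_mul_of_forall_le hA hB hAX hfix ih s).trans_eq ?_
    rw [mul_add, add_assoc, mul_div_one_sub_add hA_lt, pow_succ', mul_assoc]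

theorem truncatedMean_le_div_one_sub_mul (hA : AEMeasurable A P) (hB : AEMeasurable B P)
    (hAX : IndepFun A X P) (hX_top : ∀ᵐ ω ∂P, X ω ≠ ⊤)
    (hfix : IdentDistrib X (fun ω ↦ A ω * X ω + B ω) P P) (hA_lt : ∫⁻ ω, A ω ∂P < 1)
    (s : ℝ≥0∞) (hs : s ≠ ⊤) :
    truncatedMean P X s ≤ (∫⁻ ω, B ω ∂P) / (1 - ∫⁻ ω, A ω ∂P) * s := by
  set a := ∫⁻ ω, A ω ∂P
  set m := (∫⁻ ω, B ω ∂P) / (1 - a)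
  refine ENNReal.le_of_forall_pos_le_add fun ε hε _ ↦ ?_
  obtain ⟨N, hN⟩ := exists_truncatedMean_le_add_mul hfix.aemeasurable_fst hX_top
    (ENNReal.coe_pos.2 hε)
  have hpow : Tendsto (fun n ↦ a ^ n * N) atTop (𝓝 0) := by
    simpa using ENNReal.Tendsto.mul_const (ENNReal.tendsto_pow_atTop_nhds_zero_of_lt_one hA_lt)
      (Or.inr (ENNReal.natCast_ne_top N))
  have hlim : Tendsto (fun n ↦ ε + (a ^ n * N + m) * s) atTop (𝓝 (ε + m * s)) := by
    simpa using (ENNReal.Tendsto.mul_const (hpow.add_const m) (Or.inr hs)).const_add (ε : ℝ≥0∞)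
  rw [add_comm]
  exact ge_of_tendsto' hlim fun n ↦ truncatedMean_le_add_pow_mul hA hB hAX hfix hA_lt hN n s

theorem lintegral_eq_div_one_sub (hA : AEMeasurable A P) (hB : AEMeasurable B P)
    (hAX : IndepFun A X P) (hX_top : ∀ᵐ ω ∂P, X ω ≠ ⊤)
    (hfix : IdentDistrib X (fun ω ↦ A ω * X ω + B ω) P P) (hA_lt : ∫⁻ ω, A ω ∂P < 1) :
    ∫⁻ ω, X ω ∂P = (∫⁻ ω, B ω ∂P) / (1 - ∫⁻ ω, A ω ∂P) :=
  le_antisymm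
    (lintegral_le_of_truncatedMean_le hfix.aemeasurable_fst
      (truncatedMean_le_div_one_sub_mul hA hB hAX hX_top hfix hA_lt))
    (div_one_sub_le_of_mul_add_le hA_lt (lintegral_eq_mul_add_of_identDistrib hA hAX hfix).ge)

end Perpetuity

theorem stmt_2_general {Ω : Type*} [MeasurableSpace Ω] {P : Measure Ω} [IsProbabilityMeasure P]
    {A B X : Ω → ℝ≥0∞} (hA : AEMeasurable A P) (hB : AEMeasurable B P)
    (hAX : IndepFun A X P) (hX_top : ∀ᵐ ω ∂P, X ω ≠ ⊤)
    (hB_zero : ∫⁻ ω, B ω ∂P ≠ 0) (hB_top : ∫⁻ ω, B ω ∂P ≠ ⊤)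
    (hfix : IdentDistrib X (fun ω ↦ A ω * X ω + B ω) P P) :
    (∫⁻ ω, X ω ∂P < ⊤ ↔ ∫⁻ ω, A ω ∂P < 1) ∧
    (∫⁻ ω, A ω ∂P < 1 → ∫⁻ ω, X ω ∂P = (∫⁻ ω, B ω ∂P) / (1 - ∫⁻ ω, A ω ∂P)) := by
  have hEX := lintegral_eq_div_one_sub hA hB hAX hX_top hfix
  refine ⟨⟨fun hX_lt ↦ ?_, fun hA_lt ↦ ?_⟩, hEX⟩
  · exact lt_one_of_mul_add_le hB_zero hX_lt.ne
      (lintegral_eq_mul_add_of_identDistrib hA hAX hfix).ge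
  · rw [hEX hA_lt]
    exact ENNReal.div_lt_top hB_top (tsub_pos_of_lt hA_lt).ne'

theorem stmt_2 {Ω : Type*} [MeasurableSpace Ω] {P : Measure Ω} [IsProbabilityMeasure P]
    {A X : Ω → ℕ} (hA : Measurable A) (hX : Measurable X)
    (hAX : IndepFun A X P)
    (h0 : 0 < P {ω | A ω = 0})
    (hfix : Measure.map X P = Measure.map (fun ω => A ω * X ω + 1) P) :
    ((∫⁻ ω, (X ω : ℝ≥0∞) ∂P) < ⊤ ↔ (∫⁻ ω, (A ω : ℝ≥0∞) ∂P) < 1) ∧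
    ((∫⁻ ω, (A ω : ℝ≥0∞) ∂P) < 1 →
      ∫⁻ ω, (X ω : ℝ≥0∞) ∂P = 1 / (1 - ∫⁻ ω, (A ω : ℝ≥0∞) ∂P)) := by
  have hfix_cast := identDistrib_natCast_mul_add (B := 1) ⟨hX.aemeasurable, by fun_prop, hfix⟩
  simpa using stmt_2_general (by fun_prop) (by fun_prop) (hAX.comp .of_discrete .of_discrete)
    (by simp) (by simp) (by simp) hfix_cast
end

section
/- E[X²] < ∞ if and only if E[A²] < 1, and in that case E[A] < 1 also holds and E[X²] = (1 + 2·E[A]·E[X]) / (1 − E[A²]), where E[X] = 1/(1 − E[A]). -/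
open MeasureTheory ProbabilityTheory ENNReal

/-!
The law of `X` is invariant for the Markov chain `x ↦ A * x + 1`, and both moments come from a drift
identity `E[V (A * x + 1)] = r * V x + f x`: for `V x = x` with `r = E[A]`, `f = 1`, and for
`V x = x ^ 2` with `r = E[A ^ 2]`, `f x = 2 * E[A] * x + 1`. Integrating against the invariant law
formally gives `E[V X] = E[f X] / (1 - r)`. To see that this holds in `[0, ∞]` with no integrability
assumption, iterate the drift identity: `E[V X]` dominates the geometric series of ratio `r`, and
for `r < 1` each truncated moment `E[min (V X) M]` is at most that series plus
`E[min (r ^ n * V X) M]`, which vanishes as `n → ∞` because `V X` is almost surely finite.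
-/

theorem tsum_pow_mul_eq_div_one_sub (r c : ℝ≥0∞) : ∑' k : ℕ, r ^ k * c = c / (1 - r) := by
  rw [ENNReal.tsum_mul_right, ENNReal.tsum_geometric, div_eq_mul_inv, mul_comm]

theorem div_one_sub_le_of_mul_add_le_s3 {m c r : ℝ≥0∞} (h : r * m + c ≤ m) : c / (1 - r) ≤ m := by
  have sum_le (n : ℕ) : ∑ k ∈ Finset.range n, r ^ k * c ≤ m := by
    induction n with
    | zero => simp
    | succ n ih =>
      calc ∑ k ∈ Finset.range (n + 1), r ^ k * c
          = r * ∑ k ∈ Finset.range n, r ^ k * c + c := by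
            simp [Finset.sum_range_succ', Finset.mul_sum, pow_succ', mul_assoc]
        _ ≤ r * m + c := by gcongr
        _ ≤ m := h
  rw [← tsum_pow_mul_eq_div_one_sub]
  exact ENNReal.tsum_le_of_sum_range_le sum_le

section Truncation

variable {α : Type*} [MeasurableSpace α] {μ : Measure α} {V : α → ℝ≥0∞}

theorem lintegral_le_of_forall_lintegral_min_natCast_le_s3 (hV : AEMeasurable V μ) {C : ℝ≥0∞}
    (h : ∀ n : ℕ, ∫⁻ x, min (V x) n ∂μ ≤ C) : ∫⁻ x, V x ∂μ ≤ C := by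
  have iSup_min (x : α) : ⨆ n : ℕ, min (V x) n = V x := by
    rw [← inf_iSup_eq, ENNReal.iSup_natCast, inf_top_eq]
  calc ∫⁻ x, V x ∂μ = ∫⁻ x, ⨆ n : ℕ, min (V x) n ∂μ := by simp_rw [iSup_min]
    _ = ⨆ n : ℕ, ∫⁻ x, min (V x) n ∂μ :=
        lintegral_iSup' (fun n ↦ hV.min aemeasurable_const)
          (.of_forall fun x m n hmn ↦ min_le_min_left _ (Nat.cast_le.2 hmn))
    _ ≤ C := iSup_le h

theorem tendsto_lintegral_min_pow_mul [IsFiniteMeasure μ] (hV : AEMeasurable V μ)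
    (hV_top : ∀ᵐ x ∂μ, V x ≠ ⊤) {r M : ℝ≥0∞} (hr : r < 1) (hM : M ≠ ⊤) :
    Filter.Tendsto (fun n : ℕ ↦ ∫⁻ x, min (r ^ n * V x) M ∂μ) Filter.atTop (nhds 0) := by
  rw [← lintegral_zero (μ := μ)]
  refine tendsto_lintegral_of_dominated_convergence' (fun _ ↦ M)
    (fun n ↦ (hV.const_mul _).min aemeasurable_const)
    (fun n ↦ .of_forall fun x ↦ min_le_right _ _) (by simp [mul_ne_top, hM]) ?_
  filter_upwards [hV_top] with x hx
  have pow_mul_tendsto : Filter.Tendsto (fun n : ℕ ↦ r ^ n * V x) Filter.atTop (nhds 0) := by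
    simpa using ENNReal.Tendsto.mul_const (ENNReal.tendsto_pow_atTop_nhds_zero_of_lt_one hr)
      (.inr hx)
  simpa using pow_mul_tendsto.min (tendsto_const_nhds (x := M))

end Truncation

theorem lintegral_lt_one_of_lintegral_sq_lt_one {Ω : Type*} [MeasurableSpace Ω] {P : Measure Ω}
    [IsProbabilityMeasure P] {A : Ω → ℝ≥0∞} (h : ∫⁻ ω, A ω ^ 2 ∂P < 1) :
    ∫⁻ ω, A ω ∂P < 1 := by
  have two_mul_le (a : ℝ≥0∞) : 2 * a ≤ 1 + a ^ 2 := by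
    induction a with
    | top => simp
    | coe a => exact_mod_cast by simpa using two_mul_le_add_sq 1 a
  have two_mul_lintegral_lt : 2 * ∫⁻ ω, A ω ∂P < 2 * 1 :=
    calc 2 * ∫⁻ ω, A ω ∂P = ∫⁻ ω, 2 * A ω ∂P := (lintegral_const_mul' _ _ ofNat_ne_top).symm
      _ ≤ ∫⁻ ω, (1 + A ω ^ 2) ∂P := lintegral_mono fun ω ↦ two_mul_le (A ω)
      _ = 1 + ∫⁻ ω, A ω ^ 2 ∂P := by simp [lintegral_add_left measurable_const]
      _ < 1 + 1 := ENNReal.add_lt_add_left one_ne_top h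
      _ = 2 * 1 := by norm_num
  exact lt_of_mul_lt_mul_left' two_mul_lintegral_lt

section Drift

variable {α : Type*} [MeasurableSpace α] {κ : Kernel α α} {π : Measure α} {V f : α → ℝ≥0∞}
  {r : ℝ≥0∞}

theorem lintegral_lintegral_of_invariant (hπ : κ.Invariant π) (hV : Measurable V) :
    ∫⁻ x, ∫⁻ y, V y ∂κ x ∂π = ∫⁻ x, V x ∂π := by
  rw [← Measure.lintegral_bind κ.aemeasurable hV.aemeasurable, hπ.def]

theorem lintegral_min_le_of_drift [IsMarkovKernel κ] (hπ : κ.Invariant π) (hV : Measurable V)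
    (hf : Measurable f) (hdrift : ∀ x, ∫⁻ y, V y ∂κ x ≤ r * V x + f x) (M : ℝ≥0∞) :
    ∫⁻ x, min (V x) M ∂π ≤ ∫⁻ x, min (r * V x) M ∂π + ∫⁻ x, f x ∂π := by
  have kernel_min_le (x : α) : ∫⁻ y, min (V y) M ∂κ x ≤ min (r * V x) M + f x :=
    calc ∫⁻ y, min (V y) M ∂κ x ≤ min (∫⁻ y, V y ∂κ x) M :=
          le_min (lintegral_mono fun y ↦ min_le_left _ _)
            ((lintegral_mono fun y ↦ min_le_right _ _).trans (by simp))
      _ ≤ min (r * V x + f x) (M + f x) := min_le_min (hdrift x) le_self_add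
      _ = min (r * V x) M + f x := min_add_add_right _ _ _
  calc ∫⁻ x, min (V x) M ∂π = ∫⁻ x, ∫⁻ y, min (V y) M ∂κ x ∂π :=
        (lintegral_lintegral_of_invariant hπ (hV.min measurable_const)).symm
    _ ≤ ∫⁻ x, (min (r * V x) M + f x) ∂π := lintegral_mono kernel_min_le
    _ = ∫⁻ x, min (r * V x) M ∂π + ∫⁻ x, f x ∂π := lintegral_add_right _ hf

theorem lintegral_min_le_add_sum_of_drift [IsMarkovKernel κ] (hπ : κ.Invariant π)
    (hV : Measurable V) (hf : Measurable f)
    (hdrift : ∀ x, ∫⁻ y, V y ∂κ x ≤ r * V x + f x) (M : ℝ≥0∞) (n : ℕ) :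
    ∫⁻ x, min (V x) M ∂π ≤
      ∫⁻ x, min (r ^ n * V x) M ∂π + ∑ k ∈ Finset.range n, r ^ k * ∫⁻ x, f x ∂π := by
  induction n with
  | zero => simp
  | succ n ih =>
    have drift_scaled (x : α) :
        ∫⁻ y, r ^ n * V y ∂κ x ≤ r * (r ^ n * V x) + r ^ n * f x := by
      rw [lintegral_const_mul _ hV, mul_left_comm, ← mul_add]
      gcongr
      exact hdrift x
    have truncated_step := lintegral_min_le_of_drift hπ (hV.const_mul (r ^ n))
      (hf.const_mul (r ^ n)) drift_scaled M
    simp only [← mul_assoc, ← pow_succ', lintegral_const_mul _ hf] at truncated_step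
    rw [Finset.sum_range_succ, add_comm (∑ k ∈ Finset.range n, _), ← add_assoc]
    exact ih.trans (by gcongr)

theorem lintegral_le_div_of_drift [IsMarkovKernel κ] [IsFiniteMeasure π] (hπ : κ.Invariant π)
    (hV : Measurable V) (hf : Measurable f) (hV_top : ∀ᵐ x ∂π, V x ≠ ⊤) (hr : r < 1)
    (hdrift : ∀ x, ∫⁻ y, V y ∂κ x ≤ r * V x + f x) :
    ∫⁻ x, V x ∂π ≤ (∫⁻ x, f x ∂π) / (1 - r) := by
  refine lintegral_le_of_forall_lintegral_min_natCast_le_s3 hV.aemeasurable fun M ↦ ?_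
  have truncated_le (n : ℕ) : ∫⁻ x, min (V x) M ∂π ≤
      ∫⁻ x, min (r ^ n * V x) M ∂π + (∫⁻ x, f x ∂π) / (1 - r) := by
    refine (lintegral_min_le_add_sum_of_drift hπ hV hf hdrift M n).trans ?_
    rw [← tsum_pow_mul_eq_div_one_sub]
    gcongr
    exact ENNReal.sum_le_tsum _
  have remainder_tendsto :=
    tendsto_lintegral_min_pow_mul hV.aemeasurable hV_top hr (natCast_ne_top M)
  simpa using ge_of_tendsto' (remainder_tendsto.add_const _) truncated_le

-- For `1 ≤ r` the right-hand side is `⊤`: the subtraction truncates to `0` and `c / 0 = ⊤`.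
theorem lintegral_eq_div_of_drift_eq [IsMarkovKernel κ] [IsFiniteMeasure π] (hπ : κ.Invariant π)
    (hV : Measurable V) (hf : Measurable f) (hV_top : ∀ᵐ x ∂π, V x ≠ ⊤)
    (hf_ne : ∫⁻ x, f x ∂π ≠ 0) (hdrift : ∀ x, ∫⁻ y, V y ∂κ x = r * V x + f x) :
    ∫⁻ x, V x ∂π = (∫⁻ x, f x ∂π) / (1 - r) := by
  have stationary : ∫⁻ x, V x ∂π = r * ∫⁻ x, V x ∂π + ∫⁻ x, f x ∂π := by
    rw [← lintegral_const_mul _ hV, ← lintegral_add_right _ hf,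
      ← lintegral_lintegral_of_invariant hπ hV]
    simp_rw [hdrift]
  refine le_antisymm ?_ (div_one_sub_le_of_mul_add_le_s3 stationary.ge)
  rcases lt_or_ge r 1 with hr | hr
  · exact lintegral_le_div_of_drift hπ hV hf hV_top hr fun x ↦ (hdrift x).le
  · simp [tsub_eq_zero_of_le hr, ENNReal.div_zero hf_ne]

end Drift

/-- The transition kernel of the Markov chain `x ↦ a * x + 1` on `[0, ∞]`, where a fresh `a` is
drawn from `ν` at each step. Solutions of `X =_d A * X + 1` with `A`, `X` independent are the
random variables whose law is invariant for it. -/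
noncomputable def perpetuityKernel (ν : Measure ℝ≥0∞) : Kernel ℝ≥0∞ ℝ≥0∞ :=
  (Kernel.id ×ₖ Kernel.const ℝ≥0∞ ν).map fun p ↦ p.2 * p.1 + 1

section Perpetuity

variable {ν π : Measure ℝ≥0∞}

instance [IsProbabilityMeasure ν] : IsMarkovKernel (perpetuityKernel ν) :=
  Kernel.IsMarkovKernel.map _ (by fun_prop)

theorem lintegral_perpetuityKernel [SFinite ν] {V : ℝ≥0∞ → ℝ≥0∞} (hV : Measurable V)
    (x : ℝ≥0∞) : ∫⁻ y, V y ∂perpetuityKernel ν x = ∫⁻ a, V (a * x + 1) ∂ν := by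
  rw [perpetuityKernel, Kernel.lintegral_map _ (by fun_prop) _ hV,
    Kernel.lintegral_id_prod (by fun_prop), Kernel.const_apply]

theorem lintegral_perpetuityKernel_id [IsProbabilityMeasure ν] (x : ℝ≥0∞) :
    ∫⁻ y, y ∂perpetuityKernel ν x = (∫⁻ a, a ∂ν) * x + 1 := by
  rw [lintegral_perpetuityKernel measurable_id', lintegral_add_right _ measurable_const,
    lintegral_mul_const _ measurable_id']
  simp

theorem lintegral_perpetuityKernel_sq [IsProbabilityMeasure ν] (x : ℝ≥0∞) :
    ∫⁻ y, y ^ 2 ∂perpetuityKernel ν x =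
      (∫⁻ a, a ^ 2 ∂ν) * x ^ 2 + (1 + 2 * (∫⁻ a, a ∂ν) * x) := by
  have expand (a : ℝ≥0∞) : (a * x + 1) ^ 2 = a ^ 2 * x ^ 2 + (1 + a * (2 * x)) := by ring
  rw [lintegral_perpetuityKernel (by fun_prop)]
  simp_rw [expand]
  rw [lintegral_add_left (by fun_prop), lintegral_add_left (by fun_prop),
    lintegral_mul_const _ (by fun_prop), lintegral_mul_const _ (by fun_prop)]
  simp [mul_left_comm, mul_assoc]

theorem lintegral_id_of_invariant_perpetuityKernel [IsProbabilityMeasure ν]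
    [IsProbabilityMeasure π] (hπ : (perpetuityKernel ν).Invariant π)
    (hπ_top : ∀ᵐ x ∂π, x ≠ ⊤) :
    ∫⁻ x, x ∂π = 1 / (1 - ∫⁻ a, a ∂ν) := by
  simpa using lintegral_eq_div_of_drift_eq hπ measurable_id (measurable_const (a := 1)) hπ_top
    (by simp) lintegral_perpetuityKernel_id

theorem lintegral_sq_of_invariant_perpetuityKernel [IsProbabilityMeasure ν]
    [IsProbabilityMeasure π] (hπ : (perpetuityKernel ν).Invariant π)
    (hπ_top : ∀ᵐ x ∂π, x ≠ ⊤) :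
    ∫⁻ x, x ^ 2 ∂π = (1 + 2 * (∫⁻ a, a ∂ν) * ∫⁻ x, x ∂π) / (1 - ∫⁻ a, a ^ 2 ∂ν) := by
  have lintegral_affine : ∫⁻ x, (1 + 2 * (∫⁻ a, a ∂ν) * x) ∂π =
      1 + 2 * (∫⁻ a, a ∂ν) * ∫⁻ x, x ∂π := by
    rw [lintegral_add_left measurable_const, lintegral_const_mul _ measurable_id']
    simp
  rw [← lintegral_affine]
  refine lintegral_eq_div_of_drift_eq hπ (by fun_prop) (by fun_prop) ?_
    (by simp [lintegral_affine]) lintegral_perpetuityKernel_sq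
  filter_upwards [hπ_top] with x hx using pow_ne_top hx

end Perpetuity

section RandomVariable

variable {Ω : Type*} [MeasurableSpace Ω] {P : Measure Ω} {A X : Ω → ℝ≥0∞}

theorem invariant_perpetuityKernel_map [IsFiniteMeasure P] (hA : AEMeasurable A P)
    (hAX : IndepFun A X P) (hfix : IdentDistrib X (fun ω ↦ A ω * X ω + 1) P P) :
    (perpetuityKernel (P.map A)).Invariant (P.map X) := by
  have hX := hfix.aemeasurable_fst
  have joint_law : P.map (fun ω ↦ (X ω, A ω)) = (P.map X).prod (P.map A) :=
    (indepFun_iff_map_prod_eq_prod_map_map hX hA).1 hAX.symm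
  rw [Kernel.Invariant, perpetuityKernel, ← Measure.map_comp _ _ (by fun_prop),
    ← Measure.compProd_eq_comp_prod, Measure.compProd_const, ← joint_law,
    AEMeasurable.map_map_of_aemeasurable (by fun_prop) (hX.prodMk hA)]
  exact hfix.map_eq.symm

theorem identDistrib_natCast_mul_add_one {A X : Ω → ℕ}
    (hfix : IdentDistrib X (fun ω ↦ A ω * X ω + 1) P P) :
    IdentDistrib (fun ω ↦ (X ω : ℝ≥0∞)) (fun ω ↦ A ω * X ω + 1) P P := by
  simpa [Function.comp_def] using hfix.comp (measurable_from_top (f := (Nat.cast : ℕ → ℝ≥0∞)))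

variable [IsProbabilityMeasure P]

theorem lintegral_eq_of_identDistrib_mul_add_one (hA : AEMeasurable A P)
    (hX_top : ∀ᵐ ω ∂P, X ω ≠ ⊤) (hAX : IndepFun A X P)
    (hfix : IdentDistrib X (fun ω ↦ A ω * X ω + 1) P P) :
    ∫⁻ ω, X ω ∂P = 1 / (1 - ∫⁻ ω, A ω ∂P) := by
  have hX := hfix.aemeasurable_fst
  have := Measure.isProbabilityMeasure_map hA
  have := Measure.isProbabilityMeasure_map hX
  have law_moment := lintegral_id_of_invariant_perpetuityKernel
    (invariant_perpetuityKernel_map hA hAX hfix)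
    ((ae_map_iff hX (measurableSet_singleton ⊤).compl).2 hX_top)
  rwa [lintegral_map' aemeasurable_id' hX, lintegral_map' aemeasurable_id' hA] at law_moment

theorem lintegral_sq_eq_of_identDistrib_mul_add_one (hA : AEMeasurable A P)
    (hX_top : ∀ᵐ ω ∂P, X ω ≠ ⊤) (hAX : IndepFun A X P)
    (hfix : IdentDistrib X (fun ω ↦ A ω * X ω + 1) P P) :
    ∫⁻ ω, X ω ^ 2 ∂P =
      (1 + 2 * (∫⁻ ω, A ω ∂P) * ∫⁻ ω, X ω ∂P) / (1 - ∫⁻ ω, A ω ^ 2 ∂P) := by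
  have hX := hfix.aemeasurable_fst
  have := Measure.isProbabilityMeasure_map hA
  have := Measure.isProbabilityMeasure_map hX
  have law_moment := lintegral_sq_of_invariant_perpetuityKernel
    (invariant_perpetuityKernel_map hA hAX hfix)
    ((ae_map_iff hX (measurableSet_singleton ⊤).compl).2 hX_top)
  rwa [lintegral_map' (by fun_prop) hX, lintegral_map' aemeasurable_id' hA,
    lintegral_map' aemeasurable_id' hX, lintegral_map' (by fun_prop) hA] at law_moment

theorem stmt_3_general (hA : AEMeasurable A P) (hX_top : ∀ᵐ ω ∂P, X ω ≠ ⊤)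
    (hAX : IndepFun A X P) (hfix : IdentDistrib X (fun ω ↦ A ω * X ω + 1) P P) :
    (∫⁻ ω, X ω ^ 2 ∂P < ⊤ ↔ ∫⁻ ω, A ω ^ 2 ∂P < 1) ∧
    (∫⁻ ω, A ω ^ 2 ∂P < 1 →
      ∫⁻ ω, A ω ∂P < 1 ∧
      ∫⁻ ω, X ω ∂P = 1 / (1 - ∫⁻ ω, A ω ∂P) ∧
      ∫⁻ ω, X ω ^ 2 ∂P =
        (1 + 2 * (∫⁻ ω, A ω ∂P) * ∫⁻ ω, X ω ∂P) / (1 - ∫⁻ ω, A ω ^ 2 ∂P)) := by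
  have first_moment := lintegral_eq_of_identDistrib_mul_add_one hA hX_top hAX hfix
  have second_moment := lintegral_sq_eq_of_identDistrib_mul_add_one hA hX_top hAX hfix
  refine ⟨⟨fun hX_sq ↦ ?_, fun hA_sq ↦ ?_⟩, fun hA_sq ↦
    ⟨lintegral_lt_one_of_lintegral_sq_lt_one hA_sq, first_moment, second_moment⟩⟩
  · by_contra! hA_sq
    simp [second_moment, tsub_eq_zero_of_le hA_sq, ENNReal.div_zero] at hX_sq
  · have hA_lt : ∫⁻ ω, A ω ∂P < 1 := lintegral_lt_one_of_lintegral_sq_lt_one hA_sq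
    have hX_ne_top : ∫⁻ ω, X ω ∂P ≠ ⊤ :=
      first_moment ▸ div_ne_top one_ne_top (tsub_pos_of_lt hA_lt).ne'
    have numerator_ne_top : 1 + 2 * (∫⁻ ω, A ω ∂P) * ∫⁻ ω, X ω ∂P ≠ ⊤ := by finiteness
    rw [second_moment]
    exact div_lt_top numerator_ne_top (tsub_pos_of_lt hA_sq).ne'

end RandomVariable

theorem stmt_3 {Ω : Type*} [MeasurableSpace Ω] {P : Measure Ω} [IsProbabilityMeasure P]
    {A X : Ω → ℕ} (hA : Measurable A) (hX : Measurable X)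
    (hAX : IndepFun A X P)
    (h0 : 0 < P {ω | A ω = 0})
    (hfix : Measure.map X P = Measure.map (fun ω => A ω * X ω + 1) P) :
    ((∫⁻ ω, (X ω : ℝ≥0∞) ^ 2 ∂P) < ⊤ ↔ (∫⁻ ω, (A ω : ℝ≥0∞) ^ 2 ∂P) < 1) ∧
    ((∫⁻ ω, (A ω : ℝ≥0∞) ^ 2 ∂P) < 1 →
      (∫⁻ ω, (A ω : ℝ≥0∞) ∂P) < 1 ∧
      (∫⁻ ω, (X ω : ℝ≥0∞) ∂P) = 1 / (1 - ∫⁻ ω, (A ω : ℝ≥0∞) ∂P) ∧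
      (∫⁻ ω, (X ω : ℝ≥0∞) ^ 2 ∂P) =
        (1 + 2 * (∫⁻ ω, (A ω : ℝ≥0∞) ∂P) * (∫⁻ ω, (X ω : ℝ≥0∞) ∂P)) /
        (1 - ∫⁻ ω, (A ω : ℝ≥0∞) ^ 2 ∂P)) := by
  have hfix_nat : IdentDistrib X (fun ω ↦ A ω * X ω + 1) P P :=
    ⟨hX.aemeasurable, by fun_prop, hfix⟩
  exact stmt_3_general (measurable_from_top.comp hA).aemeasurable (by simp)
    (hAX.comp measurable_from_top measurable_from_top) (identDistrib_natCast_mul_add_one hfix_nat)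
end

section
/- Suppose A has the Poisson distribution with parameter λ > 0, i.e., ℙ[A = k] = e^{−λ} λ^k / k! for k ∈ ℕ. Then E[X] < ∞ if and only if λ < 1, and in that case E[X] = 1 / (1 − λ). -/
open MeasureTheory ProbabilityTheory ENNReal

/-!
Taking expectations in `X =_d A X + 1` gives `E X = E A * E X + 1`, which determines `E X` once it
is known to be finite. For finiteness, truncate: as `A` takes no value strictly between `0` and `1`,
`min (A X + 1) n ≤ A * min X n + 1`, so the finite number `E (min X n)` is at most
`E A * E (min X n) + 1`, hence at most `1 / (1 - E A)` uniformly in `n`. In `ℝ≥0∞` both halves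
combine into `E X = (1 - E A)⁻¹`, whose right-hand side is `∞` exactly when `1 ≤ E A`.
-/

open scoped NNReal

lemma inv_one_sub_ofReal {r : ℝ} (hr0 : 0 ≤ r) (hr1 : r < 1) :
    (1 - ENNReal.ofReal r)⁻¹ = ENNReal.ofReal (1 / (1 - r)) := by
  rw [one_div, ENNReal.ofReal_inv_of_pos (sub_pos.mpr hr1), ENNReal.ofReal_sub 1 hr0,
    ENNReal.ofReal_one]

section FixedPointInequalities

variable {a m : ℝ≥0∞}

lemma le_inv_one_sub_of_le_mul_add_one (hm : m ≠ ∞) (h : m ≤ a * m + 1) : m ≤ (1 - a)⁻¹ := by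
  rw [ENNReal.le_inv_iff_mul_le, mul_comm, ENNReal.sub_mul fun _ _ => hm, one_mul]
  exact tsub_le_iff_left.mpr h

lemma inv_one_sub_le_of_mul_add_one_le (h : a * m + 1 ≤ m) : (1 - a)⁻¹ ≤ m := by
  rcases eq_or_ne m ∞ with rfl | hm
  · exact le_top
  have ham : a * m ≠ ∞ := ne_top_of_le_ne_top hm (le_self_add.trans h)
  have one_le : 1 ≤ (1 - a) * m := by
    rw [ENNReal.sub_mul fun _ _ => hm, one_mul]
    exact ENNReal.le_sub_of_add_le_left ham h
  exact (ENNReal.inv_le_iff_le_mul (fun hm' => absurd hm' hm) (by simp)).mpr one_le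

lemma min_mul_add_one_le {x b : ℝ≥0∞} (ha : a = 0 ∨ 1 ≤ a) :
    min (a * x + 1) b ≤ a * min x b + 1 := by
  rcases ha with rfl | ha
  · simp
  rcases le_total x b with hxb | hbx
  · exact (min_le_left _ _).trans_eq (by rw [min_eq_left hxb])
  · calc min (a * x + 1) b ≤ b := min_le_right _ _
      _ ≤ a * b := le_mul_of_one_le_left' ha
      _ ≤ a * min x b + 1 := by rw [min_eq_right hbx]; exact le_self_add

end FixedPointInequalities

lemma lintegral_eq_iSup_lintegral_min_natCast {α : Type*} [MeasurableSpace α] {μ : Measure α}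
    {f : α → ℝ≥0∞} (hf : AEMeasurable f μ) :
    ∫⁻ x, f x ∂μ = ⨆ n : ℕ, ∫⁻ x, min (f x) n ∂μ := by
  have monotone_min (x : α) : Monotone fun n : ℕ => min (f x) n :=
    fun _ _ hmn => min_le_min_left _ (Nat.cast_le.mpr hmn)
  rw [← lintegral_iSup' (fun n => hf.min aemeasurable_const) (.of_forall monotone_min)]
  simp only [← inf_iSup_eq, ENNReal.iSup_natCast, inf_top_eq]

section AffineFixedPoint

variable {Ω : Type*} [MeasurableSpace Ω] {P : Measure Ω} [IsProbabilityMeasure P]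
  {A X : Ω → ℝ≥0∞}

lemma lintegral_mul_add_one_of_indepFun (hA : AEMeasurable A P) (hX : AEMeasurable X P)
    (hAX : A ⟂ᵢ[P] X) :
    ∫⁻ ω, (A ω * X ω + 1) ∂P = (∫⁻ ω, A ω ∂P) * (∫⁻ ω, X ω ∂P) + 1 := by
  rw [lintegral_add_right _ measurable_const, lintegral_one, measure_univ,
    lintegral_mul_eq_lintegral_mul_lintegral_of_indepFun'' hA hX hAX]

lemma lintegral_min_le_inv_one_sub_lintegral_of_identDistrib (hA : AEMeasurable A P)
    (hAX : A ⟂ᵢ[P] X) (hA01 : ∀ᵐ ω ∂P, A ω = 0 ∨ 1 ≤ A ω)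
    (hfix : IdentDistrib X (fun ω => A ω * X ω + 1) P P) {b : ℝ≥0∞} (hb : b ≠ ∞) :
    ∫⁻ ω, min (X ω) b ∂P ≤ (1 - ∫⁻ ω, A ω ∂P)⁻¹ := by
  have measurable_min : Measurable fun x : ℝ≥0∞ => min x b := measurable_id.min measurable_const
  have lintegral_ne_top : ∫⁻ ω, min (X ω) b ∂P ≠ ∞ := by
    refine ne_top_of_le_ne_top hb ((lintegral_mono fun ω => min_le_right (X ω) b).trans_eq ?_)
    rw [lintegral_const, measure_univ, mul_one]
  refine le_inv_one_sub_of_le_mul_add_one lintegral_ne_top ?_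
  calc ∫⁻ ω, min (X ω) b ∂P
      = ∫⁻ ω, min (A ω * X ω + 1) b ∂P := (hfix.comp measurable_min).lintegral_eq
    _ ≤ ∫⁻ ω, (A ω * min (X ω) b + 1) ∂P :=
        lintegral_mono_ae (hA01.mono fun _ => min_mul_add_one_le)
    _ = (∫⁻ ω, A ω ∂P) * (∫⁻ ω, min (X ω) b ∂P) + 1 :=
        lintegral_mul_add_one_of_indepFun hA
          (measurable_min.comp_aemeasurable hfix.aemeasurable_fst)
          (hAX.comp measurable_id measurable_min)

lemma lintegral_eq_inv_one_sub_lintegral_of_identDistrib (hA : AEMeasurable A P) (hAX : A ⟂ᵢ[P] X)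
    (hA01 : ∀ᵐ ω ∂P, A ω = 0 ∨ 1 ≤ A ω)
    (hfix : IdentDistrib X (fun ω => A ω * X ω + 1) P P) :
    ∫⁻ ω, X ω ∂P = (1 - ∫⁻ ω, A ω ∂P)⁻¹ := by
  have hX : AEMeasurable X P := hfix.aemeasurable_fst
  apply le_antisymm
  · rw [lintegral_eq_iSup_lintegral_min_natCast hX]
    exact iSup_le fun n =>
      lintegral_min_le_inv_one_sub_lintegral_of_identDistrib hA hAX hA01 hfix (natCast_ne_top n)
  · apply inv_one_sub_le_of_mul_add_one_le
    rw [← lintegral_mul_add_one_of_indepFun hA hX hAX, ← hfix.lintegral_eq]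

end AffineFixedPoint

section Poisson

lemma succ_mul_poissonMeasure_singleton_succ (r : ℝ≥0) (k : ℕ) :
    ((k + 1 : ℕ) : ℝ≥0∞) * poissonMeasure r {k + 1} = r * poissonMeasure r {k} := by
  rw [poissonMeasure_singleton, poissonMeasure_singleton, ← ENNReal.ofReal_natCast,
    ← ENNReal.ofReal_coe_nnreal, ← ENNReal.ofReal_mul (by positivity),
    ← ENNReal.ofReal_mul (by positivity), Nat.factorial_succ]
  congr 1
  push_cast
  field

lemma lintegral_natCast_poissonMeasure (r : ℝ≥0) : ∫⁻ n : ℕ, n ∂(poissonMeasure r) = r := by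
  have tsum_singleton : ∑' k : ℕ, poissonMeasure r {k} = 1 := by
    simpa using (lintegral_countable' (μ := poissonMeasure r) fun _ => 1).symm
  rw [lintegral_countable', tsum_eq_zero_add' ENNReal.summable, Nat.cast_zero, zero_mul, zero_add]
  simp only [succ_mul_poissonMeasure_singleton_succ, ENNReal.tsum_mul_left, tsum_singleton, mul_one]

variable {Ω : Type*} [MeasurableSpace Ω] {P : Measure Ω} {A : Ω → ℕ}

lemma hasLaw_poissonMeasure_of_measure_eq (hA : AEMeasurable A P) {r : ℝ≥0}
    (hpois : ∀ k : ℕ, P {ω | A ω = k} =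
      ENNReal.ofReal (Real.exp (-r) * r ^ k / (Nat.factorial k))) :
    HasLaw A (poissonMeasure r) P where
  aemeasurable := hA
  map_eq := Measure.ext_of_singleton fun k => by
    rw [Measure.map_apply_of_aemeasurable hA (measurableSet_singleton k), poissonMeasure_singleton]
    exact hpois k

lemma lintegral_natCast_of_poisson (hA : AEMeasurable A P) {lam : ℝ} (hlam : 0 ≤ lam)
    (hpois : ∀ k : ℕ, P {ω | A ω = k} =
      ENNReal.ofReal (Real.exp (-lam) * lam ^ k / (Nat.factorial k))) :
    ∫⁻ ω, (A ω : ℝ≥0∞) ∂P = ENNReal.ofReal lam := by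
  lift lam to ℝ≥0 using hlam
  rw [ENNReal.ofReal_coe_nnreal, ← lintegral_natCast_poissonMeasure]
  exact (hasLaw_poissonMeasure_of_measure_eq hA hpois).lintegral_comp .of_discrete

end Poisson

theorem stmt_4_general {Ω : Type*} [MeasurableSpace Ω] {P : Measure Ω} [IsProbabilityMeasure P]
    {A X : Ω → ℕ} (hA : AEMeasurable A P) (hAX : IndepFun A X P)
    (hfix : IdentDistrib X (fun ω => A ω * X ω + 1) P P)
    {lam : ℝ} (hlam : 0 ≤ lam) (hmean : ∫⁻ ω, (A ω : ℝ≥0∞) ∂P = ENNReal.ofReal lam) :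
    ((∫⁻ ω, (X ω : ℝ≥0∞) ∂P) < ⊤ ↔ lam < 1) ∧
    (lam < 1 → ∫⁻ ω, (X ω : ℝ≥0∞) ∂P = ENNReal.ofReal (1 / (1 - lam))) := by
  have measurable_cast : Measurable fun n : ℕ => (n : ℝ≥0∞) := .of_discrete
  have zero_or_one_le (ω : Ω) : (A ω : ℝ≥0∞) = 0 ∨ 1 ≤ (A ω : ℝ≥0∞) := by
    exact_mod_cast Nat.eq_zero_or_pos (A ω)
  have hfix_cast : IdentDistrib (fun ω => (X ω : ℝ≥0∞)) (fun ω => A ω * X ω + 1) P P := by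
    simpa [Function.comp_def] using hfix.comp measurable_cast
  have hEX : ∫⁻ ω, (X ω : ℝ≥0∞) ∂P = (1 - ENNReal.ofReal lam)⁻¹ := by
    rw [← hmean]
    exact lintegral_eq_inv_one_sub_lintegral_of_identDistrib (measurable_cast.comp_aemeasurable hA)
      (hAX.comp measurable_cast measurable_cast) (.of_forall zero_or_one_le) hfix_cast
  rw [hEX]
  exact ⟨by rw [ENNReal.inv_lt_top, tsub_pos_iff_lt, ENNReal.ofReal_lt_one],
    inv_one_sub_ofReal hlam⟩

theorem stmt_4 {Ω : Type*} [MeasurableSpace Ω] {P : Measure Ω} [IsProbabilityMeasure P]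
    {A X : Ω → ℕ} (hA : Measurable A) (hX : Measurable X)
    (hAX : IndepFun A X P)
    (h0 : 0 < P {ω | A ω = 0})
    (hfix : Measure.map X P = Measure.map (fun ω => A ω * X ω + 1) P)
    (lam : ℝ) (hlam : 0 < lam)
    (hpois : ∀ k : ℕ, P {ω | A ω = k} =
      ENNReal.ofReal (Real.exp (-lam) * lam ^ k / (Nat.factorial k))) :
    ((∫⁻ ω, (X ω : ℝ≥0∞) ∂P) < ⊤ ↔ lam < 1) ∧
    (lam < 1 → ∫⁻ ω, (X ω : ℝ≥0∞) ∂P = ENNReal.ofReal (1 / (1 - lam))) :=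
  stmt_4_general hA.aemeasurable hAX ⟨hX.aemeasurable, by fun_prop, hfix⟩ hlam.le
    (lintegral_natCast_of_poisson hA.aemeasurable hlam.le hpois)
end

section
/- Suppose A has the negative binomial distribution with parameters r ≥ 1 (an integer) and 0 < p < 1, i.e., ℙ[A = k] = C(k + r − 1, k) p^r (1−p)^k for k ∈ ℕ. Then E[X²] < ∞ if and only if r(1−p) + r²(1−p)² < p²; for r = 1 this is equivalent to p > 2/3, and for r ≥ 2 it is equivalent to p > (2r² + r)/(2(r² − 1)) − (1/2)·√((5r² + 4r)/(r² − 1)²). When the condition holds, Var(X) = (p−1)p²r / ((pr + p − r)² (p²(r² − 1) − p·r(2r + 1) + r(r + 1))). -/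
open MeasureTheory ProbabilityTheory ENNReal

/-!
For real `q ≥ 1`, the moment `E[X ^ q]` is finite exactly when `E[A ^ q] < 1`. If it is finite, then
superadditivity of `t ↦ t ^ q` and independence give `E[X ^ q] ≥ E[A ^ q] E[X ^ q] + 1`. Conversely,
since `A` is integer valued, `min (A X + 1) M ≤ A min(X, M) + 1`, so by Minkowski's inequality
`u := ‖min(X, M)‖_q` satisfies `u ≤ ‖A‖_q u + 1`, which bounds `u` uniformly in `M`.

Solving the equations for the first two moments gives
`Var X = Var A / ((1 - E A)² (1 - E[A²]))`. The factorial moments of the negative binomial law,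
`r (r + 1) ⋯ (r + j - 1) ((1 - p) / p) ^ j`, come from summing binomial series and supply `E A` and
`E[A²]`.
-/

section AffineRecursion

variable {a b x : ℝ≥0∞}

theorem le_div_one_sub_of_le_mul_add (ha : a < 1) (hx : x ≠ ⊤) (h : x ≤ a * x + b) :
    x ≤ b / (1 - a) := by
  rw [ENNReal.le_div_iff_mul_le (.inl (tsub_pos_of_lt ha).ne') (.inl (by finiteness)), mul_comm,
    ENNReal.sub_mul fun _ _ => hx, one_mul, tsub_le_iff_left]
  exact h

theorem eq_div_one_sub_of_eq_mul_add (ha : a < 1) (hx : x ≠ ⊤) (h : x = a * x + b) :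
    x = b / (1 - a) := by
  rw [ENNReal.eq_div_iff (tsub_pos_of_lt ha).ne' (by finiteness), ENNReal.sub_mul fun _ _ => hx,
    one_mul]
  exact ENNReal.sub_eq_of_eq_add (ENNReal.mul_ne_top ha.ne_top hx) (h.trans (add_comm _ _))

end AffineRecursion

theorem min_mul_add_le (a x b M : ℕ) : min (a * x + b) M ≤ a * min x M + b := by
  rcases a.eq_zero_or_pos with rfl | ha
  · simp
  · rw [← Nat.mul_min_mul_left, ← min_add_add_right]
    exact min_le_min_left _ ((Nat.le_mul_of_pos_left M ha).trans (Nat.le_add_right _ b))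

section Lintegral

variable {Ω : Type*} [MeasurableSpace Ω] {P : Measure Ω}

theorem lintegral_comp_le_of_forall_min_le {X : Ω → ℕ} (hX : Measurable X) {g : ℕ → ℝ≥0∞}
    (hg : Monotone g) {C : ℝ≥0∞} (hC : ∀ M, ∫⁻ ω, g (min (X ω) M) ∂P ≤ C) :
    ∫⁻ ω, g (X ω) ∂P ≤ C := by
  refine le_of_tendsto' (lintegral_tendsto_of_tendsto_of_monotone (fun M => ?_)
    (.of_forall fun ω M N hMN => hg (min_le_min_left (X ω) hMN)) (.of_forall fun ω => ?_)) hC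
  · exact ((measurable_of_countable fun n => g (min n M)).comp hX).aemeasurable
  · refine tendsto_const_nhds.congr' ?_
    filter_upwards [Filter.eventually_ge_atTop (X ω)] with M hM
    rw [min_eq_left hM]

theorem lintegral_natCast_le_lintegral_sq (X : Ω → ℕ) :
    ∫⁻ ω, (X ω : ℝ≥0∞) ∂P ≤ ∫⁻ ω, (X ω : ℝ≥0∞) ^ 2 ∂P :=
  lintegral_mono fun ω => by
    beta_reduce
    exact_mod_cast Nat.le_self_pow two_ne_zero (X ω)

theorem lt_one_of_lintegral_sq_eq_ofReal {A : Ω → ℕ} {m s : ℝ} (hs1 : s < 1)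
    (hm : ∫⁻ ω, (A ω : ℝ≥0∞) ∂P = ENNReal.ofReal m)
    (hs : ∫⁻ ω, (A ω : ℝ≥0∞) ^ 2 ∂P = ENNReal.ofReal s) : m < 1 := by
  rw [← ENNReal.ofReal_lt_one, ← hm]
  exact (lintegral_natCast_le_lintegral_sq A).trans_lt (hs ▸ ENNReal.ofReal_lt_one.2 hs1)

theorem lintegral_ofReal_comp_eq_of_hasSum {α : Type*} [MeasurableSpace α] [Countable α]
    [MeasurableSingletonClass α] {A : Ω → α} (hA : Measurable A) {c w : α → ℝ} {S : ℝ}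
    (hc : ∀ k, 0 ≤ c k) (hw : ∀ k, 0 ≤ w k) (hlaw : ∀ k, P {ω | A ω = k} = ENNReal.ofReal (w k))
    (hS : HasSum (fun k => c k * w k) S) :
    ∫⁻ ω, ENNReal.ofReal (c (A ω)) ∂P = ENNReal.ofReal S := by
  have hterm (k : α) :
      ENNReal.ofReal (c k) * P.map A {k} = ENNReal.ofReal (c k * w k) := by
    rw [Measure.map_apply hA (measurableSet_singleton k), ENNReal.ofReal_mul (hc k), ← hlaw k]
    rfl
  calc ∫⁻ ω, ENNReal.ofReal (c (A ω)) ∂P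
      = ∑' k, ENNReal.ofReal (c k) * P.map A {k} := by
        rw [← lintegral_map (measurable_of_countable fun k => ENNReal.ofReal (c k)) hA,
          lintegral_countable']
    _ = ENNReal.ofReal S := by
        simp_rw [hterm]
        rw [← ENNReal.ofReal_tsum_of_nonneg (fun k => mul_nonneg (hc k) (hw k)) hS.summable,
          hS.tsum_eq]

end Lintegral

/-- `X` solves the perpetuity equation `X =_d A * X + 1` with `A` independent of `X`. The
coefficient and the solution live on one probability space, and the equation relates the laws of
`X` and `A * X + 1`, not the random variables themselves. -/
structure IsPerpetuity {Ω : Type*} [MeasurableSpace Ω] (A X : Ω → ℕ) (P : Measure Ω) : Prop where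
  measurable_coeff : Measurable A
  measurable_sol : Measurable X
  indepFun : IndepFun A X P
  identDistrib : IdentDistrib X (fun ω => A ω * X ω + 1) P P

namespace IsPerpetuity

variable {Ω : Type*} [MeasurableSpace Ω] {P : Measure Ω} {A X : Ω → ℕ}

theorem lintegral_comp_eq (h : IsPerpetuity A X P) (g : ℕ → ℝ≥0∞) :
    ∫⁻ ω, g (X ω) ∂P = ∫⁻ ω, g (A ω * X ω + 1) ∂P :=
  (h.identDistrib.comp (measurable_of_countable g)).lintegral_eq

theorem lintegral_comp_mul_comp (h : IsPerpetuity A X P) (f g : ℕ → ℝ≥0∞) :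
    ∫⁻ ω, f (A ω) * g (X ω) ∂P = (∫⁻ ω, f (A ω) ∂P) * ∫⁻ ω, g (X ω) ∂P :=
  have hf := measurable_of_countable f
  have hg := measurable_of_countable g
  lintegral_mul_eq_lintegral_mul_lintegral_of_indepFun (hf.comp h.measurable_coeff)
    (hg.comp h.measurable_sol) (h.indepFun.comp hf hg)

theorem lintegral_mul_rpow (h : IsPerpetuity A X P) (g : ℕ → ℝ≥0∞) {q : ℝ} (hq : 0 ≤ q) :
    ∫⁻ ω, ((A ω : ℝ≥0∞) * g (X ω)) ^ q ∂P =
      (∫⁻ ω, (A ω : ℝ≥0∞) ^ q ∂P) * ∫⁻ ω, g (X ω) ^ q ∂P := by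
  simp_rw [ENNReal.mul_rpow_of_nonneg _ _ hq]
  exact h.lintegral_comp_mul_comp (fun n => (n : ℝ≥0∞) ^ q) fun n => g n ^ q

variable [IsProbabilityMeasure P]

theorem lintegral_rpow_mul_add_one_le (h : IsPerpetuity A X P) {q : ℝ} (hq : 1 ≤ q) :
    (∫⁻ ω, (A ω : ℝ≥0∞) ^ q ∂P) * (∫⁻ ω, (X ω : ℝ≥0∞) ^ q ∂P) + 1 ≤
      ∫⁻ ω, (X ω : ℝ≥0∞) ^ q ∂P := by
  calc (∫⁻ ω, (A ω : ℝ≥0∞) ^ q ∂P) * (∫⁻ ω, (X ω : ℝ≥0∞) ^ q ∂P) + 1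
      = ∫⁻ ω, (((A ω : ℝ≥0∞) * X ω) ^ q + 1 ^ q) ∂P := by
        rw [← h.lintegral_mul_rpow (fun n => (n : ℝ≥0∞)) (zero_le_one.trans hq),
          lintegral_add_right _ measurable_const]
        simp
    _ ≤ ∫⁻ ω, ((A ω : ℝ≥0∞) * X ω + 1) ^ q ∂P :=
        lintegral_mono fun ω => ENNReal.add_rpow_le_rpow_add _ _ hq
    _ = ∫⁻ ω, (X ω : ℝ≥0∞) ^ q ∂P := by
        rw [h.lintegral_comp_eq fun n => (n : ℝ≥0∞) ^ q]
        push_cast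
        rfl

theorem lintegral_coeff_rpow_lt_one (h : IsPerpetuity A X P) {q : ℝ} (hq : 1 ≤ q)
    (hX : ∫⁻ ω, (X ω : ℝ≥0∞) ^ q ∂P < ⊤) : ∫⁻ ω, (A ω : ℝ≥0∞) ^ q ∂P < 1 := by
  by_contra! hA
  have hle : (∫⁻ ω, (X ω : ℝ≥0∞) ^ q ∂P) + 1 ≤ ∫⁻ ω, (X ω : ℝ≥0∞) ^ q ∂P :=
    (add_le_add_left (le_mul_of_one_le_left' hA) 1).trans (h.lintegral_rpow_mul_add_one_le hq)
  exact (ENNReal.lt_add_right hX.ne one_ne_zero).not_ge hle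

theorem lintegral_min_rpow_le (h : IsPerpetuity A X P) {q : ℝ} (hq : 1 ≤ q) (M : ℕ) :
    (∫⁻ ω, ((min (X ω) M : ℕ) : ℝ≥0∞) ^ q ∂P) ^ (1 / q) ≤
      (∫⁻ ω, (A ω : ℝ≥0∞) ^ q ∂P) ^ (1 / q) *
        (∫⁻ ω, ((min (X ω) M : ℕ) : ℝ≥0∞) ^ q ∂P) ^ (1 / q) + 1 := by
  have hq0 : 0 ≤ q := zero_le_one.trans hq
  have hA := h.measurable_coeff
  have hX := h.measurable_sol
  calc (∫⁻ ω, ((min (X ω) M : ℕ) : ℝ≥0∞) ^ q ∂P) ^ (1 / q)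
      = (∫⁻ ω, ((min (A ω * X ω + 1) M : ℕ) : ℝ≥0∞) ^ q ∂P) ^ (1 / q) := by
        rw [h.lintegral_comp_eq fun n => ((min n M : ℕ) : ℝ≥0∞) ^ q]
    _ ≤ (∫⁻ ω, ((A ω : ℝ≥0∞) * (min (X ω) M : ℕ) + 1) ^ q ∂P) ^ (1 / q) := by
        gcongr with ω
        exact_mod_cast min_mul_add_le (A ω) (X ω) 1 M
    _ ≤ (∫⁻ ω, ((A ω : ℝ≥0∞) * (min (X ω) M : ℕ)) ^ q ∂P) ^ (1 / q) +
          (∫⁻ _, 1 ^ q ∂P) ^ (1 / q) :=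
        ENNReal.lintegral_Lp_add_le (by fun_prop) aemeasurable_const hq
    _ = _ := by
        rw [h.lintegral_mul_rpow (fun n => ((min n M : ℕ) : ℝ≥0∞)) hq0,
          ENNReal.mul_rpow_of_nonneg _ _ (by positivity)]
        simp

theorem lintegral_rpow_lt_top (h : IsPerpetuity A X P) {q : ℝ} (hq : 1 ≤ q)
    (hA : ∫⁻ ω, (A ω : ℝ≥0∞) ^ q ∂P < 1) : ∫⁻ ω, (X ω : ℝ≥0∞) ^ q ∂P < ⊤ := by
  have hq0 : 0 < q := zero_lt_one.trans_le hq
  set a := (∫⁻ ω, (A ω : ℝ≥0∞) ^ q ∂P) ^ (1 / q)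
  have ha : a < 1 := ENNReal.rpow_lt_one hA (by positivity)
  have hfin (M : ℕ) : ∫⁻ ω, ((min (X ω) M : ℕ) : ℝ≥0∞) ^ q ∂P < ⊤ :=
    calc ∫⁻ ω, ((min (X ω) M : ℕ) : ℝ≥0∞) ^ q ∂P
        ≤ ∫⁻ _, (M : ℝ≥0∞) ^ q ∂P := by
          gcongr
          exact min_le_right _ _
      _ < ⊤ := by simp [ENNReal.rpow_lt_top_of_nonneg hq0.le]
  have hbound (M : ℕ) :
      ∫⁻ ω, ((min (X ω) M : ℕ) : ℝ≥0∞) ^ q ∂P ≤ (1 / (1 - a)) ^ q := by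
    rw [← ENNReal.rpow_inv_le_iff hq0, ← one_div]
    exact le_div_one_sub_of_le_mul_add ha
      (ENNReal.rpow_ne_top_of_nonneg (by positivity) (hfin M).ne) (h.lintegral_min_rpow_le hq M)
  have hmono : Monotone fun n : ℕ => (n : ℝ≥0∞) ^ q := fun m n hmn => by
    beta_reduce
    gcongr
  refine (lintegral_comp_le_of_forall_min_le h.measurable_sol hmono hbound).trans_lt ?_
  exact ENNReal.rpow_lt_top_of_nonneg hq0.le
    (ENNReal.div_ne_top one_ne_top (tsub_pos_of_lt ha).ne')

theorem lintegral_rpow_lt_top_iff (h : IsPerpetuity A X P) {q : ℝ} (hq : 1 ≤ q) :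
    ∫⁻ ω, (X ω : ℝ≥0∞) ^ q ∂P < ⊤ ↔ ∫⁻ ω, (A ω : ℝ≥0∞) ^ q ∂P < 1 :=
  ⟨h.lintegral_coeff_rpow_lt_one hq, h.lintegral_rpow_lt_top hq⟩

theorem lintegral_lt_top_iff (h : IsPerpetuity A X P) :
    ∫⁻ ω, (X ω : ℝ≥0∞) ∂P < ⊤ ↔ ∫⁻ ω, (A ω : ℝ≥0∞) ∂P < 1 := by
  simpa only [ENNReal.rpow_one] using h.lintegral_rpow_lt_top_iff le_rfl

theorem lintegral_sq_lt_top_iff (h : IsPerpetuity A X P) :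
    ∫⁻ ω, (X ω : ℝ≥0∞) ^ 2 ∂P < ⊤ ↔ ∫⁻ ω, (A ω : ℝ≥0∞) ^ 2 ∂P < 1 := by
  simpa only [ENNReal.rpow_two] using h.lintegral_rpow_lt_top_iff one_le_two

theorem lintegral_eq (h : IsPerpetuity A X P) :
    ∫⁻ ω, (X ω : ℝ≥0∞) ∂P = (∫⁻ ω, (A ω : ℝ≥0∞) ∂P) * (∫⁻ ω, (X ω : ℝ≥0∞) ∂P) + 1 := by
  calc ∫⁻ ω, (X ω : ℝ≥0∞) ∂P
      = ∫⁻ ω, ((A ω : ℝ≥0∞) * X ω + 1) ∂P := by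
        rw [h.lintegral_comp_eq fun n => (n : ℝ≥0∞)]
        push_cast
        rfl
    _ = _ := by
        rw [lintegral_add_right _ measurable_const,
          h.lintegral_comp_mul_comp (fun n => (n : ℝ≥0∞)) fun n => (n : ℝ≥0∞)]
        simp

theorem lintegral_sq_eq (h : IsPerpetuity A X P) :
    ∫⁻ ω, (X ω : ℝ≥0∞) ^ 2 ∂P =
      (∫⁻ ω, (A ω : ℝ≥0∞) ^ 2 ∂P) * (∫⁻ ω, (X ω : ℝ≥0∞) ^ 2 ∂P) +
        (2 * ((∫⁻ ω, (A ω : ℝ≥0∞) ∂P) * ∫⁻ ω, (X ω : ℝ≥0∞) ∂P) + 1) := by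
  have hA := h.measurable_coeff
  have hX := h.measurable_sol
  calc ∫⁻ ω, (X ω : ℝ≥0∞) ^ 2 ∂P
      = ∫⁻ ω, ((A ω : ℝ≥0∞) ^ 2 * (X ω : ℝ≥0∞) ^ 2 + (2 * ((A ω : ℝ≥0∞) * X ω) + 1)) ∂P := by
        rw [h.lintegral_comp_eq fun n => (n : ℝ≥0∞) ^ 2]
        refine lintegral_congr fun ω => ?_
        push_cast
        ring
    _ = _ := by
        rw [lintegral_add_right _ (by fun_prop), lintegral_add_right _ measurable_const,
          lintegral_const_mul _ (by fun_prop),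
          h.lintegral_comp_mul_comp (fun n => (n : ℝ≥0∞) ^ 2) fun n => (n : ℝ≥0∞) ^ 2,
          h.lintegral_comp_mul_comp (fun n => (n : ℝ≥0∞)) fun n => (n : ℝ≥0∞)]
        simp

section MomentValues

variable {m s : ℝ}

theorem lintegral_eq_ofReal (h : IsPerpetuity A X P) (hm0 : 0 ≤ m) (hm1 : m < 1)
    (hm : ∫⁻ ω, (A ω : ℝ≥0∞) ∂P = ENNReal.ofReal m) :
    ∫⁻ ω, (X ω : ℝ≥0∞) ∂P = ENNReal.ofReal (1 / (1 - m)) := by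
  have hA : ∫⁻ ω, (A ω : ℝ≥0∞) ∂P < 1 := hm ▸ ENNReal.ofReal_lt_one.2 hm1
  have hX := (h.lintegral_lt_top_iff.2 hA).ne
  have hfix := h.lintegral_eq
  rw [hm] at hfix
  rw [ENNReal.ofReal_div_of_pos (sub_pos.2 hm1), ENNReal.ofReal_sub _ hm0, ENNReal.ofReal_one]
  exact eq_div_one_sub_of_eq_mul_add (ENNReal.ofReal_lt_one.2 hm1) hX hfix

theorem lintegral_sq_eq_ofReal (h : IsPerpetuity A X P) (hm0 : 0 ≤ m) (hs0 : 0 ≤ s) (hs1 : s < 1)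
    (hm : ∫⁻ ω, (A ω : ℝ≥0∞) ∂P = ENNReal.ofReal m)
    (hs : ∫⁻ ω, (A ω : ℝ≥0∞) ^ 2 ∂P = ENNReal.ofReal s) :
    ∫⁻ ω, (X ω : ℝ≥0∞) ^ 2 ∂P = ENNReal.ofReal ((2 * (m * (1 / (1 - m))) + 1) / (1 - s)) := by
  have hm1 := lt_one_of_lintegral_sq_eq_ofReal hs1 hm hs
  have : 0 < 1 - m := sub_pos.2 hm1
  have hA : ∫⁻ ω, (A ω : ℝ≥0∞) ^ 2 ∂P < 1 := hs ▸ ENNReal.ofReal_lt_one.2 hs1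
  have hX := (h.lintegral_sq_lt_top_iff.2 hA).ne
  have hfix := h.lintegral_sq_eq
  rw [hs, hm, h.lintegral_eq_ofReal hm0 hm1 hm, ← ENNReal.ofReal_mul hm0, ← ENNReal.ofReal_ofNat 2,
    ← ENNReal.ofReal_mul zero_le_two, ← ENNReal.ofReal_one,
    ← ENNReal.ofReal_add (by positivity) zero_le_one] at hfix
  rw [ENNReal.ofReal_div_of_pos (sub_pos.2 hs1), ENNReal.ofReal_sub _ hs0, ENNReal.ofReal_one]
  exact eq_div_one_sub_of_eq_mul_add (ENNReal.ofReal_lt_one.2 hs1) hX hfix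

theorem lintegral_sq_sub_sq_eq_ofReal (h : IsPerpetuity A X P) (hm0 : 0 ≤ m) (hs0 : 0 ≤ s)
    (hs1 : s < 1) (hm : ∫⁻ ω, (A ω : ℝ≥0∞) ∂P = ENNReal.ofReal m)
    (hs : ∫⁻ ω, (A ω : ℝ≥0∞) ^ 2 ∂P = ENNReal.ofReal s) :
    (∫⁻ ω, (X ω : ℝ≥0∞) ^ 2 ∂P) - (∫⁻ ω, (X ω : ℝ≥0∞) ∂P) ^ 2 =
      ENNReal.ofReal ((s - m ^ 2) / ((1 - m) ^ 2 * (1 - s))) := by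
  have hm1 := lt_one_of_lintegral_sq_eq_ofReal hs1 hm hs
  have hm1' : 1 - m ≠ 0 := (sub_pos.2 hm1).ne'
  have hs1' : 1 - s ≠ 0 := (sub_pos.2 hs1).ne'
  rw [h.lintegral_eq_ofReal hm0 hm1 hm, h.lintegral_sq_eq_ofReal hm0 hs0 hs1 hm hs,
    ← ENNReal.ofReal_pow (one_div_nonneg.2 (sub_nonneg.2 hm1.le)),
    ← ENNReal.ofReal_sub _ (by positivity)]
  congr 1
  field_simp
  ring

end MomentValues

end IsPerpetuity

theorem descFactorial_mul_choose_add (m d j : ℕ) :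
    (m + j).descFactorial j * (m + j + d).choose d =
      (d + 1).ascFactorial j * (m + (d + j)).choose (d + j) := by
  apply Nat.eq_of_mul_eq_mul_left (Nat.mul_pos m.factorial_pos d.factorial_pos)
  calc m.factorial * d.factorial * ((m + j).descFactorial j * (m + j + d).choose d)
      = (m + j + d).choose d * (m.factorial * (m + j).descFactorial j) * d.factorial := by ring
    _ = (m + j + d).factorial := by
        have hdesc := Nat.factorial_mul_descFactorial (Nat.le_add_left j m)
        rw [Nat.add_sub_cancel] at hdesc
        rw [hdesc, Nat.add_choose_mul_factorial_mul_factorial]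
    _ = (m + (d + j)).choose (d + j) * m.factorial * (d.factorial * (d + 1).ascFactorial j) := by
        rw [Nat.factorial_mul_ascFactorial, Nat.add_choose_mul_factorial_mul_factorial,
          add_assoc, add_comm j]
    _ = m.factorial * d.factorial * ((d + 1).ascFactorial j * (m + (d + j)).choose (d + j)) := by
        ring

theorem hasSum_descFactorial_mul_choose_mul_geometric {𝕜 : Type*} [NormedField 𝕜]
    [HasSummableGeomSeries 𝕜] (d j : ℕ) {x : 𝕜} (hx : ‖x‖ < 1) :
    HasSum (fun n : ℕ => (n.descFactorial j : 𝕜) * (n + d).choose d * x ^ n)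
      ((d + 1).ascFactorial j * x ^ j / (1 - x) ^ (d + j + 1)) := by
  have hsupport : ∀ n ∉ Set.range (· + j),
      (n.descFactorial j : 𝕜) * (n + d).choose d * x ^ n = 0 := by
    intro n hn
    have hnj : n < j := by
      by_contra! hjn
      exact hn ⟨n - j, Nat.sub_add_cancel hjn⟩
    simp [Nat.descFactorial_eq_zero_iff_lt.2 hnj]
  rw [← (add_left_injective j).hasSum_iff hsupport]
  convert! (hasSum_choose_mul_geometric_of_norm_lt_one (d + j) hx).mul_left
    (((d + 1).ascFactorial j : 𝕜) * x ^ j) using 1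
  · funext m
    have hcoeff : ((m + j).descFactorial j : 𝕜) * (m + j + d).choose d =
        (d + 1).ascFactorial j * (m + (d + j)).choose (d + j) :=
      mod_cast congrArg (Nat.cast : ℕ → 𝕜) (descFactorial_mul_choose_add m d j)
    simp only [Function.comp_apply, hcoeff, pow_add]
    ring
  · rw [mul_one_div]

/-- The mass at `k` of the negative binomial law with parameters `r` and `p`, the number of
failures before the `r`-th success. The subtraction is truncated only for `r = k = 0`, where the
binomial coefficient is `1`, so that `r = 0` gives the Dirac mass at `0`. -/
noncomputable def negBinomialMass (r : ℕ) (p : ℝ) (k : ℕ) : ℝ :=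
  ((k + r - 1).choose k : ℝ) * p ^ r * (1 - p) ^ k

section NegBinomial

variable {r : ℕ} {p : ℝ}

theorem negBinomialMass_nonneg (hp0 : 0 ≤ p) (hp1 : p ≤ 1) (k : ℕ) :
    0 ≤ negBinomialMass r p k := by
  have := sub_nonneg.2 hp1
  unfold negBinomialMass
  positivity

theorem hasSum_descFactorial_mul_negBinomialMass (hr : 1 ≤ r) (hp0 : 0 < p) (hp1 : p ≤ 1) (j : ℕ) :
    HasSum (fun k => (k.descFactorial j : ℝ) * negBinomialMass r p k)
      (r.ascFactorial j * ((1 - p) / p) ^ j) := by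
  obtain ⟨d, rfl⟩ : ∃ d, r = d + 1 := ⟨r - 1, by lia⟩
  have hnorm : ‖1 - p‖ < 1 := by
    rw [Real.norm_of_nonneg (sub_nonneg.2 hp1)]
    linarith
  convert! (hasSum_descFactorial_mul_choose_mul_geometric d j hnorm).mul_left (p ^ (d + 1)) using 1
  · funext k
    rw [negBinomialMass, ← add_assoc, Nat.add_sub_cancel, Nat.choose_symm_add]
    ring
  · rw [_root_.sub_sub_cancel, div_pow]
    field_simp
    ring

variable {Ω : Type*} [MeasurableSpace Ω] {P : Measure Ω} {A : Ω → ℕ}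

theorem lintegral_descFactorial_of_negBinomial (hA : Measurable A) (hr : 1 ≤ r) (hp0 : 0 < p)
    (hp1 : p ≤ 1) (hlaw : ∀ k, P {ω | A ω = k} = ENNReal.ofReal (negBinomialMass r p k)) (j : ℕ) :
    ∫⁻ ω, ((A ω).descFactorial j : ℝ≥0∞) ∂P =
      ENNReal.ofReal (r.ascFactorial j * ((1 - p) / p) ^ j) := by
  simpa only [ENNReal.ofReal_natCast] using
    lintegral_ofReal_comp_eq_of_hasSum hA (fun k => Nat.cast_nonneg (k.descFactorial j))
      (negBinomialMass_nonneg hp0.le hp1) hlaw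
      (hasSum_descFactorial_mul_negBinomialMass hr hp0 hp1 j)

theorem lintegral_of_negBinomial (hA : Measurable A) (hr : 1 ≤ r) (hp0 : 0 < p) (hp1 : p ≤ 1)
    (hlaw : ∀ k, P {ω | A ω = k} = ENNReal.ofReal (negBinomialMass r p k)) :
    ∫⁻ ω, (A ω : ℝ≥0∞) ∂P = ENNReal.ofReal (r * (1 - p) / p) := by
  simpa [mul_div_assoc, Nat.ascFactorial_succ] using
    lintegral_descFactorial_of_negBinomial hA hr hp0 hp1 hlaw 1

theorem lintegral_sq_of_negBinomial (hA : Measurable A) (hr : 1 ≤ r) (hp0 : 0 < p) (hp1 : p ≤ 1)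
    (hlaw : ∀ k, P {ω | A ω = k} = ENNReal.ofReal (negBinomialMass r p k)) :
    ∫⁻ ω, (A ω : ℝ≥0∞) ^ 2 ∂P =
      ENNReal.ofReal ((r * (1 - p) + (r : ℝ) ^ 2 * (1 - p) ^ 2) / p ^ 2) := by
  have hsq (n : ℕ) : n ^ 2 = n.descFactorial 2 + n := by
    cases n <;> simp [Nat.descFactorial_succ]; ring
  have := sub_nonneg.2 hp1
  calc ∫⁻ ω, (A ω : ℝ≥0∞) ^ 2 ∂P
      = ∫⁻ ω, (((A ω).descFactorial 2 : ℝ≥0∞) + A ω) ∂P :=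
        lintegral_congr fun ω => mod_cast hsq (A ω)
    _ = ENNReal.ofReal (r.ascFactorial 2 * ((1 - p) / p) ^ 2) +
          ENNReal.ofReal (r * (1 - p) / p) := by
        rw [lintegral_add_right _ (by fun_prop), lintegral_of_negBinomial hA hr hp0 hp1 hlaw,
          lintegral_descFactorial_of_negBinomial hA hr hp0 hp1 hlaw 2]
    _ = ENNReal.ofReal ((r * (1 - p) + (r : ℝ) ^ 2 * (1 - p) ^ 2) / p ^ 2) := by
        rw [← ENNReal.ofReal_add (by positivity) (by positivity)]
        congr 1
        simp only [Nat.ascFactorial_succ, Nat.ascFactorial_zero]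
        push_cast
        field_simp
        ring

end NegBinomial

section NegBinomialAlgebra

variable {r p : ℝ}

theorem one_sub_add_one_sub_sq_lt_sq_iff : (1 - p) + (1 - p) ^ 2 < p ^ 2 ↔ 2 / 3 < p := by
  constructor <;> intro h <;> linarith

theorem mul_add_sq_mul_lt_sq_iff_root_lt (hr : 1 < r) (hp1 : p ≤ 1) :
    r * (1 - p) + r ^ 2 * (1 - p) ^ 2 < p ^ 2 ↔
      (2 * r ^ 2 + r) / (2 * (r ^ 2 - 1)) -
        (1 / 2) * √((5 * r ^ 2 + 4 * r) / (r ^ 2 - 1) ^ 2) < p := by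
  have hD : 0 < r ^ 2 - 1 := by nlinarith
  rw [Real.sqrt_div' _ (by positivity), Real.sqrt_sq hD.le]
  set q := √(5 * r ^ 2 + 4 * r)
  have hq0 : 0 ≤ q := Real.sqrt_nonneg _
  have hq : q ^ 2 = 5 * r ^ 2 + 4 * r := Real.sq_sqrt (by positivity)
  have hroot : (2 * r ^ 2 + r) / (2 * (r ^ 2 - 1)) - (1 / 2) * (q / (r ^ 2 - 1)) =
      (2 * r ^ 2 + r - q) / (2 * (r ^ 2 - 1)) := by
    field_simp
  have hfactor : 4 * (r ^ 2 - 1) * (r * (1 - p) + r ^ 2 * (1 - p) ^ 2 - p ^ 2) =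
      (p * (2 * (r ^ 2 - 1)) - (2 * r ^ 2 + r + q)) *
        (p * (2 * (r ^ 2 - 1)) - (2 * r ^ 2 + r - q)) := by
    linear_combination hq
  have hlarge : p * (2 * (r ^ 2 - 1)) - (2 * r ^ 2 + r + q) < 0 := by nlinarith
  calc r * (1 - p) + r ^ 2 * (1 - p) ^ 2 < p ^ 2
      ↔ 4 * (r ^ 2 - 1) * (r * (1 - p) + r ^ 2 * (1 - p) ^ 2 - p ^ 2) < 0 := by
        simp [mul_neg_iff, hD, hD.not_gt]
    _ ↔ 0 < p * (2 * (r ^ 2 - 1)) - (2 * r ^ 2 + r - q) := by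
        rw [hfactor]
        simp only [mul_neg_iff, hlarge, hlarge.not_gt, true_and, false_and, false_or]
    _ ↔ (2 * r ^ 2 + r) / (2 * (r ^ 2 - 1)) - (1 / 2) * (q / (r ^ 2 - 1)) < p := by
        rw [hroot, div_lt_iff₀ (by positivity), sub_pos]

theorem sub_sq_div_eq_of_negBinomial_moments (hp : p ≠ 0) :
    ((r * (1 - p) + r ^ 2 * (1 - p) ^ 2) / p ^ 2 - (r * (1 - p) / p) ^ 2) /
        ((1 - r * (1 - p) / p) ^ 2 * (1 - (r * (1 - p) + r ^ 2 * (1 - p) ^ 2) / p ^ 2)) =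
      (p - 1) * p ^ 2 * r /
        ((p * r + p - r) ^ 2 * (p ^ 2 * (r ^ 2 - 1) - p * r * (2 * r + 1) + r * (r + 1))) := by
  have hvar : (r * (1 - p) + r ^ 2 * (1 - p) ^ 2) / p ^ 2 - (r * (1 - p) / p) ^ 2 =
      r * (1 - p) / p ^ 2 := by
    field_simp
    ring
  have hmean : 1 - r * (1 - p) / p = (p * r + p - r) / p := by
    field_simp
    ring
  have hsq : 1 - (r * (1 - p) + r ^ 2 * (1 - p) ^ 2) / p ^ 2 =
      -(p ^ 2 * (r ^ 2 - 1) - p * r * (2 * r + 1) + r * (r + 1)) / p ^ 2 := by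
    field_simp
    ring
  rw [hvar, hmean, hsq]
  generalize p ^ 2 * (r ^ 2 - 1) - p * r * (2 * r + 1) + r * (r + 1) = Q
  generalize p * r + p - r = T
  field_simp
  ring

end NegBinomialAlgebra

theorem stmt_9 {Ω : Type*} [MeasurableSpace Ω] {P : Measure Ω} [IsProbabilityMeasure P]
    {A X : Ω → ℕ} (hA : Measurable A) (hX : Measurable X)
    (hAX : IndepFun A X P)
    (h0 : 0 < P {ω | A ω = 0})
    (hfix : Measure.map X P = Measure.map (fun ω => A ω * X ω + 1) P)
    (r : ℕ) (hr : 1 ≤ r) (p : ℝ) (hp0 : 0 < p) (hp1 : p < 1)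
    (hnb : ∀ k : ℕ, P {ω | A ω = k} =
      ENNReal.ofReal (((k + r - 1).choose k : ℝ) * p ^ r * (1 - p) ^ k)) :
    ((∫⁻ ω, (X ω : ℝ≥0∞) ^ 2 ∂P) < ⊤ ↔
      (r : ℝ) * (1 - p) + (r : ℝ) ^ 2 * (1 - p) ^ 2 < p ^ 2) ∧
    (r = 1 → ((r : ℝ) * (1 - p) + (r : ℝ) ^ 2 * (1 - p) ^ 2 < p ^ 2 ↔ 2 / 3 < p)) ∧
    (2 ≤ r → ((r : ℝ) * (1 - p) + (r : ℝ) ^ 2 * (1 - p) ^ 2 < p ^ 2 ↔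
      (2 * (r : ℝ) ^ 2 + r) / (2 * ((r : ℝ) ^ 2 - 1)) -
        (1 / 2) * Real.sqrt ((5 * (r : ℝ) ^ 2 + 4 * r) / ((r : ℝ) ^ 2 - 1) ^ 2) < p)) ∧
    ((r : ℝ) * (1 - p) + (r : ℝ) ^ 2 * (1 - p) ^ 2 < p ^ 2 →
      (∫⁻ ω, (X ω : ℝ≥0∞) ^ 2 ∂P) - (∫⁻ ω, (X ω : ℝ≥0∞) ∂P) ^ 2 =
        ENNReal.ofReal ((p - 1) * p ^ 2 * r /
          ((p * r + p - r) ^ 2 *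
            (p ^ 2 * ((r : ℝ) ^ 2 - 1) - p * r * (2 * r + 1) + r * (r + 1))))) := by
  have hperp : IsPerpetuity A X P := ⟨hA, hX, hAX, hX.aemeasurable, by fun_prop, hfix⟩
  have hmean := lintegral_of_negBinomial hA hr hp0 hp1.le hnb
  have hsq := lintegral_sq_of_negBinomial hA hr hp0 hp1.le hnb
  have : 0 < 1 - p := sub_pos.2 hp1
  have hsq_lt_one : (r * (1 - p) + (r : ℝ) ^ 2 * (1 - p) ^ 2) / p ^ 2 < 1 ↔
      r * (1 - p) + (r : ℝ) ^ 2 * (1 - p) ^ 2 < p ^ 2 := div_lt_one (by positivity)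
  refine ⟨?_, ?_, fun hr2 => ?_, fun hcond => ?_⟩
  · rw [hperp.lintegral_sq_lt_top_iff, hsq, ENNReal.ofReal_lt_one, hsq_lt_one]
  · rintro rfl
    simpa using one_sub_add_one_sub_sq_lt_sq_iff
  · exact mul_add_sq_mul_lt_sq_iff_root_lt (mod_cast hr2) hp1.le
  · rw [hperp.lintegral_sq_sub_sq_eq_ofReal (by positivity) (by positivity) (hsq_lt_one.2 hcond)
      hmean hsq, sub_sq_div_eq_of_negBinomial_moments hp0.ne']
end
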